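/- arXiv:1505.06515 — 3 statements merged into one kernel-verified Lean document; each statement's English description precedes it below -/
import Mathlib

section
/- Let a < 0 be real, not a negative integer, such that sin(π·√(a² + 2an)/(2a)) ≠ 0 for every integer n with 1 ≤ n ≤ ⌊−a/2⌋, and let 0 < w ≤ 1 be real. Then ∫_{−∞}^{∞} exp((v² + i·v)·log w) / ( ζ(4·a·(v² + i·v)) · cosh(π·v) ) dv = w^{1/4}/ζ(a) + (π/2)·∑_{n=⌈−a/2⌉}^{∞} w^{−n/(2a)} / ( ζ'(−2n) · √(−a² − 2an) · sinh(π·√(−a² − 2an)/(2a)) ) − (π/2)·∑_{n=1}^{⌊−a/2⌋} w^{−n/(2a)} / ( ζ'(−2n) · √(a² + 2an) · sin(π·√(a² + 2an)/(2a)) ). -/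
/-!
Put `u = v + i/2`. Then `v² + iv = u² + 1/4` and `cosh πv = -i sinh πu`, so the integral becomes the
integral over the line `Im u = 1/2` of the odd function
`F u = w^(u² + 1/4) / (ζ(4a(u² + 1/4)) · (-i sinh πu))` (`stripFun`).

The residue theorem is applied to `F` on the rectangles `[-R, R] × [-1/2, 1/2]`. As `F` is odd, the
top and bottom sides contribute equally. In the strip `|Im u| ≤ 1/2` the argument of `ζ` has
nonpositive real part, where the only zeros of `ζ` are the trivial ones, all simple. Hence the poles
are `u = 0`, from `sinh`, with residue giving `w^(1/4)/ζ(a)`, and the solutions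
`± √(-a² - 2an)/(2a)` of `4a(u² + 1/4) = -2n` for `n ≥ 1`, whose residues give the terms of the
series (`integral_stripFun_eq`). Since `a` is not a negative integer, all these points are distinct.

With `R = R_N` determined by `4a(R² + 1/4) = -(2N + 1)`, the vertical sides tend to zero
(`exists_side_bound`). This rests on the functional equation `ζ(1 - z) = cos(πz/2) · h(z)` and on the
growth of `h` in sectors around the positive real axis (`exists_zetaFactor_ge`), which follows from
the growth of `Γ`. The same estimate bounds the modulus of the derivative of `ζ` at `-2n` below by
`e^n` for large `n`, hence the absolute convergence of the series (`summable_seriesTerm`).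

Finally, for `n < -a/2` the number `-a² - 2an` is negative, so its square root is
`i√(a² + 2an)` and the hyperbolic sine becomes a sine, with a change of sign
(`seriesTerm_eq_neg`).
-/

open Complex MeasureTheory
open scoped Real

section Auxiliary

open Filter Topology Set

/-! ### The residue theorem on a rectangle -/

/-- The integral of `f` counterclockwise around the boundary of the rectangle with lower left corner
`z` and upper right corner `w`, written as the sum of its four sides. -/
noncomputable def rectInt (f : ℂ → ℂ) (z w : ℂ) : ℂ :=
  (∫ x : ℝ in z.re..w.re, f (x + z.im * I)) - (∫ x : ℝ in z.re..w.re, f (x + w.im * I)) +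
      I * (∫ y : ℝ in z.im..w.im, f (w.re + y * I)) -
      I * ∫ y : ℝ in z.im..w.im, f (z.re + y * I)

/-- The integral of `1 / (e * u)` along a segment `c + t d` that avoids the branch cut of `log`. The
factor `e` is used with `e = -1` for a side of a rectangle that crosses the cut, whose negative
then avoids it. -/
lemma integral_inv_of_slit {c d : ℂ} (e : ℂ) (α β : ℝ)
    (h : ∀ t ∈ uIcc α β, c + t * d ∈ slitPlane) :
    d * ∫ t : ℝ in α..β, (e * (c + t * d))⁻¹ = e⁻¹ * (log (c + β * d) - log (c + α * d)) := by
  have key : ∫ t : ℝ in α..β, d * (c + t * d)⁻¹ = log (c + β * d) - log (c + α * d) := by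
    refine intervalIntegral.integral_eq_sub_of_hasDerivAt (f := fun t : ℝ => log (c + t * d))
      (f' := fun t : ℝ => d * (c + t * d)⁻¹) ?_ ?_
    · intro t ht
      have h1 : HasDerivAt (fun t : ℝ => c + t * d) d t := by
        simpa using ((Complex.ofRealCLM.hasDerivAt (x := t)).mul_const d).const_add c
      have := h1.clog_real (h t ht)
      simpa [div_eq_mul_inv] using this
    · apply ContinuousOn.intervalIntegrable
      refine continuousOn_const.mul (ContinuousOn.inv₀ (by fun_prop) ?_)
      intro t ht
      exact slitPlane_ne_zero (h t ht)
  rw [← key]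
  simp only [mul_inv, intervalIntegral.integral_const_mul]
  ring

/-- The winding number of a rectangle around an interior point is one. Each side is a difference of
logarithms; on the left side `log (-q)` replaces `log q`, and the two jumps `π * I` at its
ends are all that remains of the telescoping sum. -/
lemma rectInt_inv {z w p : ℂ} (h1 : z.re < p.re) (h2 : p.re < w.re) (h3 : z.im < p.im)
    (h4 : p.im < w.im) : rectInt (fun u => (u - p)⁻¹) z w = 2 * π * I := by
  have B := integral_inv_of_slit (c := z.im * I - p) (d := 1) 1 z.re w.re
    (fun t _ => by
      right; simp; linarith)
  have T := integral_inv_of_slit (c := w.im * I - p) (d := 1) 1 z.re w.re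
    (fun t _ => by
      right; simp; linarith)
  have Rr := integral_inv_of_slit (c := w.re - p) (d := I) 1 z.im w.im
    (fun t _ => by
      left; simp; linarith)
  have L := integral_inv_of_slit (c := p - z.re) (d := -I) (-1) z.im w.im
    (fun t _ => by
      left; simp; linarith)
  have key : ∀ q : ℂ, 0 < q.im → log q - log (-q) = π * I := by
    intro q hq
    rw [log, log, norm_neg, arg_neg_eq_arg_sub_pi_of_im_pos hq]
    push_cast; ring
  have k1 := key (z.re + w.im * I - p) (by simp; linarith)
  have k2 := key (p - z.re - z.im * I) (by simp; linarith)
  have e1 : ∀ x y : ℝ, (x : ℂ) + y * I - p = 1 * (y * I - p + x * 1) := by intros; ring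
  have e2 : ∀ x y : ℝ, (x : ℂ) + y * I - p = 1 * (x - p + y * I) := by intros; ring
  have e3 : ∀ x y : ℝ, (x : ℂ) + y * I - p = -1 * (p - x + y * -I) := by intros; ring
  unfold rectInt
  simp_rw [e1 _ z.im, e1 _ w.im, e2 w.re, e3 z.re]
  have a1 : (z.im * I - p + z.re * 1 : ℂ) = -(p - z.re - z.im * I) := by ring
  have a2 : (z.im * I - p + w.re * 1 : ℂ) = w.re - p + z.im * I := by ring
  have a3 : (w.im * I - p + z.re * 1 : ℂ) = z.re + w.im * I - p := by ring
  have a4 : (w.im * I - p + w.re * 1 : ℂ) = w.re - p + w.im * I := by ring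
  have a5 : (p - z.re + w.im * -I : ℂ) = -(z.re + w.im * I - p) := by ring
  have a6 : (p - z.re + z.im * -I : ℂ) = p - z.re - z.im * I := by ring
  rw [a1, a2] at B
  rw [a3, a4] at T
  rw [a5, a6] at L
  simp only [one_mul, inv_one, inv_neg] at *
  linear_combination B - T + Rr + L + k1 + k2

/-- The boundary integral only depends on the values on the boundary. -/
lemma rectInt_congr {f g : ℂ → ℂ} {z w : ℂ} (h1 : z.re ≤ w.re) (h2 : z.im ≤ w.im)
    (h : ∀ u : ℂ, u.re ∈ Icc z.re w.re → u.im ∈ Icc z.im w.im →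
      ¬ (u.re ∈ Ioo z.re w.re ∧ u.im ∈ Ioo z.im w.im) → f u = g u) :
    rectInt f z w = rectInt g z w := by
  unfold rectInt
  congr 1; congr 1; congr 1
  · refine intervalIntegral.integral_congr fun x hx => h _ ?_ ?_ ?_ <;>
    rw [uIcc_of_le h1] at hx <;> simp [hx.1, hx.2, h2]
  · refine intervalIntegral.integral_congr fun x hx => h _ ?_ ?_ ?_ <;>
    rw [uIcc_of_le h1] at hx <;> simp [hx.1, hx.2, h2]
  · congr 1
    refine intervalIntegral.integral_congr fun x hx => h _ ?_ ?_ ?_ <;>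
    rw [uIcc_of_le h2] at hx <;> simp [hx.1, hx.2, h1]
  · congr 1
    refine intervalIntegral.integral_congr fun x hx => h _ ?_ ?_ ?_ <;>
    rw [uIcc_of_le h2] at hx <;> simp [hx.1, hx.2, h1]

lemma rectInt_add {f g : ℂ → ℂ} {z w : ℂ} (h1 : z.re ≤ w.re) (h2 : z.im ≤ w.im)
    (hf : ∀ u : ℂ, u.re ∈ Icc z.re w.re → u.im ∈ Icc z.im w.im →
      ¬ (u.re ∈ Ioo z.re w.re ∧ u.im ∈ Ioo z.im w.im) → ContinuousAt f u)
    (hg : ∀ u : ℂ, u.re ∈ Icc z.re w.re → u.im ∈ Icc z.im w.im →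
      ¬ (u.re ∈ Ioo z.re w.re ∧ u.im ∈ Ioo z.im w.im) → ContinuousAt g u) :
    rectInt (fun u => f u + g u) z w = rectInt f z w + rectInt g z w := by
  have hor : ∀ φ : ℂ → ℂ, (∀ u : ℂ, u.re ∈ Icc z.re w.re → u.im ∈ Icc z.im w.im →
      ¬ (u.re ∈ Ioo z.re w.re ∧ u.im ∈ Ioo z.im w.im) → ContinuousAt φ u) →
      ∀ y : ℝ, y = z.im ∨ y = w.im →
      IntervalIntegrable (fun x : ℝ => φ (x + y * I)) volume z.re w.re := by
    intro φ hφ y hy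
    apply ContinuousOn.intervalIntegrable
    intro x hx
    rw [uIcc_of_le h1] at hx
    apply ContinuousAt.continuousWithinAt
    refine ContinuousAt.comp (f := fun x : ℝ => (x : ℂ) + y * I) (hφ _ ?_ ?_ ?_) (by fun_prop)
    · simpa using hx
    · rcases hy with rfl | rfl <;> simp [h2]
    · rcases hy with rfl | rfl <;> simp
  have ver : ∀ φ : ℂ → ℂ, (∀ u : ℂ, u.re ∈ Icc z.re w.re → u.im ∈ Icc z.im w.im →
      ¬ (u.re ∈ Ioo z.re w.re ∧ u.im ∈ Ioo z.im w.im) → ContinuousAt φ u) →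
      ∀ x : ℝ, x = z.re ∨ x = w.re →
      IntervalIntegrable (fun y : ℝ => φ (x + y * I)) volume z.im w.im := by
    intro φ hφ x hx
    apply ContinuousOn.intervalIntegrable
    intro y hy
    rw [uIcc_of_le h2] at hy
    apply ContinuousAt.continuousWithinAt
    refine ContinuousAt.comp (f := fun y : ℝ => (x : ℂ) + y * I) (hφ _ ?_ ?_ ?_) (by fun_prop)
    · rcases hx with rfl | rfl <;> simp [h1]
    · simpa using hy
    · rcases hx with rfl | rfl <;> simp
  unfold rectInt
  rw [intervalIntegral.integral_add (hor f hf _ (.inl rfl)) (hor g hg _ (.inl rfl)),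
    intervalIntegral.integral_add (hor f hf _ (.inr rfl)) (hor g hg _ (.inr rfl)),
    intervalIntegral.integral_add (ver f hf _ (.inl rfl)) (ver g hg _ (.inl rfl)),
    intervalIntegral.integral_add (ver f hf _ (.inr rfl)) (ver g hg _ (.inr rfl))]
  ring

lemma rectInt_const_mul (c : ℂ) (f : ℂ → ℂ) (z w : ℂ) :
    rectInt (fun u => c * f u) z w = c * rectInt f z w := by
  unfold rectInt
  simp only [intervalIntegral.integral_const_mul]
  ring

/-- The residue theorem for a rectangle and finitely many at most simple poles, given by the limits
`c p` of `(u - p) * f u`. By induction on the set of poles: subtracting `c p / (u - p)` leaves a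
removable singularity at `p`. -/
theorem rectInt_residue {z w : ℂ} (h1 : z.re < w.re) (h2 : z.im < w.im) (S : Finset ℂ)
    (c : ℂ → ℂ) : ∀ f : ℂ → ℂ,
    (∀ p ∈ S, p.re ∈ Ioo z.re w.re ∧ p.im ∈ Ioo z.im w.im) →
    (∀ u : ℂ, u.re ∈ Icc z.re w.re → u.im ∈ Icc z.im w.im → u ∉ S → DifferentiableAt ℂ f u) →
    (∀ p ∈ S, Tendsto (fun u => (u - p) * f u) (𝓝[≠] p) (𝓝 (c p))) →
    rectInt f z w = 2 * π * I * ∑ p ∈ S, c p := by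
  classical
  induction S using Finset.induction_on with
  | empty =>
    intro f _ hd _
    have := Complex.integral_boundary_rect_eq_zero_of_differentiableOn f z w (by
      intro u hu
      rw [uIcc_of_le h1.le, uIcc_of_le h2.le, mem_reProdIm] at hu
      exact (hd u hu.1 hu.2 (by simp)).differentiableWithinAt)
    simpa [rectInt, smul_eq_mul] using this
  | insert p S hp ih =>
    intro f hS hd hc
    obtain ⟨hpr, hpi⟩ := hS p (Finset.mem_insert_self p S)
    set f1 : ℂ → ℂ := fun u => f u - c p * (u - p)⁻¹ with hf1
    set f2 : ℂ → ℂ := Function.update f1 p (limUnder (𝓝[≠] p) f1) with hf2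
    have hpole : ∀ u : ℂ, u ≠ p → DifferentiableAt ℂ (fun u => c p * (u - p)⁻¹) u := by
      intro u hu
      have : u - p ≠ 0 := sub_ne_zero.2 hu
      fun_prop (disch := assumption)
    have hf2ne : ∀ u, u ≠ p → f2 =ᶠ[𝓝 u] f1 := by
      intro u hu
      filter_upwards [isOpen_ne.mem_nhds hu] with x hx
      exact Function.update_of_ne hx _ _
    have hlit : (fun u => f1 u - f1 p) =o[𝓝[≠] p] fun u => (u - p)⁻¹ := by
      rw [Asymptotics.isLittleO_iff_tendsto']
      · have t1 := hc p (Finset.mem_insert_self p S)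
        have t2 : Tendsto (fun u : ℂ => (u - p) * f1 p) (𝓝[≠] p) (𝓝 0) := by
          have : Tendsto (fun u : ℂ => (u - p) * f1 p) (𝓝 p) (𝓝 ((p - p) * f1 p)) :=
            ContinuousAt.tendsto (by fun_prop)
          simpa using this.mono_left nhdsWithin_le_nhds
        have t3 := (t1.sub_const (c p)).sub t2
        rw [sub_self, sub_zero] at t3
        refine t3.congr' ?_
        filter_upwards [self_mem_nhdsWithin] with u hu
        have : u - p ≠ 0 := sub_ne_zero.2 hu
        simp only [hf1]
        field_simp
      · filter_upwards [self_mem_nhdsWithin] with u hu h0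
        exact absurd (inv_eq_zero.1 h0) (sub_ne_zero.2 hu)
    have hnhds : {u : ℂ | u.re ∈ Ioo z.re w.re ∧ u.im ∈ Ioo z.im w.im ∧ u ∉ S} ∈ 𝓝 p := by
      have o1 : {u : ℂ | u.re ∈ Ioo z.re w.re} ∈ 𝓝 p :=
        (isOpen_Ioo.preimage continuous_re).mem_nhds hpr
      have o2 : {u : ℂ | u.im ∈ Ioo z.im w.im} ∈ 𝓝 p :=
        (isOpen_Ioo.preimage continuous_im).mem_nhds hpi
      have o3 : {u : ℂ | u ∉ S} ∈ 𝓝 p :=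
        (S.finite_toSet.isClosed.isOpen_compl).mem_nhds (by simpa using hp)
      filter_upwards [o1, o2, o3] with u a b c using ⟨a, b, c⟩
    have hdp : DifferentiableAt ℂ f2 p := by
      refine (Complex.differentiableOn_update_limUnder_of_isLittleO hnhds ?_ hlit).differentiableAt
        hnhds
      rintro u ⟨⟨a, b, e⟩, hu⟩
      refine DifferentiableAt.differentiableWithinAt ?_
      refine (hd u (Ioo_subset_Icc_self a) (Ioo_subset_Icc_self b) ?_).sub (hpole u hu)
      simp [e]; exact hu
    have hI := ih f2 (fun q hq => hS q (Finset.mem_insert_of_mem hq)) (by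
      intro u a b hu
      by_cases hup : u = p
      · rw [hup]; exact hdp
      · rw [(hf2ne u hup).differentiableAt_iff]
        exact (hd u a b (by simp [hu, hup])).sub (hpole u hup)) (by
      intro q hq
      have hqp : q ≠ p := fun h => hp (h ▸ hq)
      have t1 := hc q (Finset.mem_insert_of_mem hq)
      have t2 : Tendsto (fun u : ℂ => (u - q) * (c p * (u - p)⁻¹)) (𝓝[≠] q) (𝓝 0) := by
        have hq0 : q - p ≠ 0 := sub_ne_zero.2 hqp
        have : Tendsto (fun u : ℂ => (u - q) * (c p * (u - p)⁻¹)) (𝓝 q)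
            (𝓝 ((q - q) * (c p * (q - p)⁻¹))) :=
          ContinuousAt.tendsto (by fun_prop (disch := assumption))
        simpa using this.mono_left nhdsWithin_le_nhds
      have t3 := t1.sub t2
      rw [sub_zero] at t3
      refine t3.congr' ?_
      filter_upwards [nhdsWithin_le_nhds (hf2ne q hqp)] with u hu
      rw [hu]; simp only [hf1]; ring)
    have hbd : ∀ u : ℂ, ¬ (u.re ∈ Ioo z.re w.re ∧ u.im ∈ Ioo z.im w.im) → u ∉ insert p S :=
      fun u hu hm => hu (hS u hm)
    have hbp : ∀ u : ℂ, ¬ (u.re ∈ Ioo z.re w.re ∧ u.im ∈ Ioo z.im w.im) → u ≠ p :=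
      fun u hu hm => hbd u hu (by simp [hm])
    have e1 : rectInt f z w = rectInt (fun u => f2 u + c p * (u - p)⁻¹) z w := by
      refine rectInt_congr h1.le h2.le fun u _ _ hu => ?_
      rw [(hf2ne u (hbp u hu)).eq_of_nhds]
      simp [hf1]
    rw [e1, rectInt_add h1.le h2.le, hI, rectInt_const_mul, rectInt_inv hpr.1 hpr.2 hpi.1 hpi.2,
      Finset.sum_insert hp]
    · ring
    · intro u a b hu
      rw [continuousAt_congr (hf2ne u (hbp u hu))]
      exact ((hd u a b (hbd u hu)).sub (hpole u (hbp u hu))).continuousAt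
    · intro u a b hu
      exact (hpole u (hbp u hu)).continuousAt

/-! ### Bounds for the Gamma and zeta functions -/

lemma abs_sinh_im_le_norm_cos (z : ℂ) : |Real.sinh z.im| ≤ ‖cos z‖ := by
  have h := abs_norm_sub_norm_le (cexp (z * I)) (-cexp (-z * I))
  rw [sub_neg_eq_add, norm_neg, norm_exp, norm_exp] at h
  rw [Complex.cos, norm_div, Real.sinh_eq, abs_div]
  simp at h ⊢
  rw [abs_sub_comm] at h
  linarith

lemma abs_cos_re_le_norm_cos (z : ℂ) : |Real.cos z.re| ≤ ‖cos z‖ := by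
  refine le_trans ?_ (abs_re_le_norm _)
  have : (cos z).re = Real.cos z.re * Real.cosh z.im := by
    conv_lhs => rw [← re_add_im z, cos_add_mul_I]
    simp [← ofReal_cos, ← ofReal_cosh, ← ofReal_sin, ← ofReal_sinh]
  rw [this, abs_mul, abs_of_pos (Real.cosh_pos _)]
  exact le_mul_of_one_le_right (abs_nonneg _) (Real.one_le_cosh _)

lemma abs_sinh_re_le_norm_sinh (z : ℂ) : |Real.sinh z.re| ≤ ‖sinh z‖ := by
  have h := abs_norm_sub_norm_le (cexp z) (cexp (-z))
  rw [norm_exp, norm_exp] at h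
  rw [Complex.sinh, norm_div, Real.sinh_eq, abs_div]
  simp at h ⊢
  linarith

lemma norm_sin_le (z : ℂ) : ‖sin z‖ ≤ Real.exp |z.im| := by
  rw [Complex.sin, norm_div, norm_mul]
  have h := norm_sub_le (cexp (-z * I)) (cexp (z * I))
  rw [norm_exp, norm_exp] at h
  have h1 : (-z * I).re ≤ |z.im| := by simpa using le_abs_self z.im
  have h2 : (z * I).re ≤ |z.im| := by simpa using neg_le_abs z.im
  have e1 := Real.exp_le_exp.2 h1
  have e2 := Real.exp_le_exp.2 h2
  have hI : ‖I‖ = 1 := norm_I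
  have h2' : ‖(2 : ℂ)‖ = 2 := by simp
  rw [hI, h2', mul_one]
  linarith

lemma norm_Gamma_le {z : ℂ} (hz : 0 < z.re) : ‖Gamma z‖ ≤ Real.Gamma z.re := by
  rw [Gamma_eq_integral hz, GammaIntegral, Real.Gamma_eq_integral hz]
  refine (norm_integral_le_integral_norm _).trans (le_of_eq ?_)
  refine setIntegral_congr_fun measurableSet_Ioi fun x hx => ?_
  simp only [norm_mul]
  rw [norm_cpow_eq_rpow_re_of_pos hx]
  rw [norm_real, Real.norm_of_nonneg (Real.exp_pos _).le]
  simp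

lemma real_Gamma_le_one {x : ℝ} (h1 : 1 ≤ x) (h2 : x ≤ 2) : Real.Gamma x ≤ 1 := by
  have := Real.convexOn_Gamma.le_max_of_mem_Icc (x := 1) (y := 2) (z := x)
    (by simp) (by simp) ⟨h1, h2⟩
  simpa [Real.Gamma_two] using this

/-- In the strip `1 ≤ re z ≤ 2` the function `1 / Γ` grows at most like `exp (π |im z|)`: away from
the real axis by the reflection formula together with `|Γ (3 - z)| ≤ 1`, and near it by
compactness. -/
lemma exists_norm_inv_Gamma_le :
    ∃ C : ℝ, 0 < C ∧ ∀ z : ℂ, 1 ≤ z.re → z.re ≤ 2 → ‖(Gamma z)⁻¹‖ ≤ C * Real.exp (π * |z.im|) := by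
  have hK : IsCompact (Icc (1:ℝ) 2 ×ℂ Icc (-1:ℝ) 1) := isCompact_Icc.reProdIm isCompact_Icc
  obtain ⟨C, hC⟩ := hK.exists_bound_of_continuousOn
    (differentiable_one_div_Gamma.continuous.continuousOn)
  refine ⟨max C 1, by positivity, fun z h1 h2 => ?_⟩
  have hexp : 1 ≤ Real.exp (π * |z.im|) := Real.one_le_exp (by positivity)
  by_cases ht : |z.im| ≤ 1
  · have := hC z ⟨⟨h1, h2⟩, abs_le.1 ht⟩
    calc _ ≤ C := this
      _ ≤ max C 1 := le_max_left _ _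
      _ ≤ _ := le_mul_of_one_le_right (by positivity) hexp
  · push Not at ht
    have hne : z.im ≠ 0 := by rintro h; simp [h] at ht; linarith
    have a1 : (1 - z) ≠ 0 := fun h => hne (by simpa using congrArg im h)
    have a2 : (2 - z) ≠ 0 := fun h => hne (by simpa using congrArg im h)
    have g1 : Gamma (3 - z) = (2 - z) * ((1 - z) * Gamma (1 - z)) := by
      rw [← Gamma_add_one _ a1, show 1 - z + 1 = 2 - z by ring, ← Gamma_add_one _ a2]
      congr 1; ring
    have hs : sin (π * z) ≠ 0 := by
      rw [Ne, sin_eq_zero_iff]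
      rintro ⟨k, hk⟩
      have := congrArg im hk
      simp [Real.pi_ne_zero] at this
      exact hne this
    have g2 := Gamma_mul_Gamma_one_sub z
    have hpi : (π : ℂ) ≠ 0 := ofReal_ne_zero.2 Real.pi_ne_zero
    have hG : Gamma z ≠ 0 := fun h => by
      rw [h, zero_mul, eq_comm, div_eq_zero_iff] at g2
      tauto
    have e : (Gamma z)⁻¹ = Gamma (3 - z) * sin (π * z) / (π * (2 - z) * (1 - z)) := by
      rw [eq_div_iff hs] at g2
      rw [g1, eq_div_iff (mul_ne_zero (mul_ne_zero hpi a2) a1), inv_mul_eq_iff_eq_mul₀ hG]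
      linear_combination -(2 - z) * (1 - z) * g2
    rw [e, norm_div, norm_mul, norm_mul, norm_mul]
    have b1 : ‖Gamma (3 - z)‖ ≤ 1 := by
      refine (norm_Gamma_le (by simp; linarith)).trans (real_Gamma_le_one ?_ ?_) <;> simp <;> linarith
    have b2 : ‖sin (π * z)‖ ≤ Real.exp (π * |z.im|) := by
      refine (norm_sin_le _).trans (le_of_eq ?_)
      simp [abs_mul, abs_of_pos Real.pi_pos]
    have b3 : 1 ≤ ‖2 - z‖ := ht.le.trans (by simpa using abs_im_le_norm (2 - z))
    have b4 : 1 ≤ ‖1 - z‖ := ht.le.trans (by simpa using abs_im_le_norm (1 - z))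
    have b5 : 1 ≤ ‖(π : ℂ)‖ := by
      rw [norm_real, Real.norm_of_nonneg Real.pi_pos.le]; linarith [Real.pi_gt_three]
    rw [div_le_iff₀ (by positivity)]
    have b6 : 1 ≤ ‖(π : ℂ)‖ * ‖2 - z‖ * ‖1 - z‖ :=
      one_le_mul_of_one_le_of_one_le (one_le_mul_of_one_le_of_one_le b5 b3) b4
    calc _ ≤ 1 * Real.exp (π * |z.im|) := by gcongr
      _ ≤ max C 1 * Real.exp (π * |z.im|) := by gcongr; exact le_max_right _ _
      _ ≤ _ := le_mul_of_one_le_right (by positivity) b6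

lemma factorial_mul_norm_Gamma_le (z : ℂ) (hz : 1 ≤ z.re) (m : ℕ) :
    m.factorial * ‖Gamma z‖ ≤ ‖Gamma (z + m)‖ := by
  induction m with
  | zero => simp
  | succ m ih =>
    have hne : z + m ≠ 0 := fun h => by
      have := congrArg re h
      simp at this
      have : (0:ℝ) ≤ m := m.cast_nonneg
      linarith
    rw [Nat.cast_succ, ← add_assoc, Gamma_add_one _ hne, norm_mul, Nat.factorial_succ]
    have : (m + 1 : ℝ) ≤ ‖z + m‖ := by
      refine le_trans ?_ (re_le_norm _)
      simp; linarith
    push_cast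
    rw [mul_assoc]
    gcongr

/-- Comparison of `ζ z - 1` with `ζ 2 - 1 = π ^ 2 / 6 - 1 < 1`. -/
lemma norm_riemannZeta_ge {z : ℂ} (hz : 2 ≤ z.re) : 2 - π ^ 2 / 6 ≤ ‖riemannZeta z‖ := by
  have hs : Summable fun n : ℕ => 1 / ((n : ℝ) + 1) ^ 2 := by
    have := (summable_nat_add_iff 1).2 hasSum_zeta_two.summable
    simpa using this
  have hval : ∑' n : ℕ, 1 / ((n : ℝ) + 1 + 1) ^ 2 = π ^ 2 / 6 - 1 := by
    have h0 := hasSum_zeta_two.summable.sum_add_tsum_nat_add 2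
    rw [hasSum_zeta_two.tsum_eq] at h0
    simp [Finset.sum_range_succ] at h0
    rw [← h0]
    simp [add_assoc]
    norm_num
  have hle : ∀ n : ℕ, ‖1 / ((n : ℂ) + 1) ^ z‖ ≤ 1 / ((n : ℝ) + 1) ^ 2 := by
    intro n
    have hp : (0:ℝ) < (n:ℝ) + 1 := by positivity
    have : ((n : ℂ) + 1) = ((n + 1 : ℝ) : ℂ) := by push_cast; rfl
    rw [norm_div, norm_one, this, norm_cpow_eq_rpow_re_of_pos hp, ← Real.rpow_natCast]
    gcongr
    · linarith
    · exact_mod_cast hz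
  have hsum : Summable fun n : ℕ => 1 / ((n : ℂ) + 1) ^ z := Summable.of_norm_bounded hs hle
  rw [zeta_eq_tsum_one_div_nat_add_one_cpow (by linarith), hsum.tsum_eq_zero_add]
  have hs2 : Summable fun n : ℕ => 1 / ((n : ℝ) + 1 + 1) ^ 2 := by
    have := (summable_nat_add_iff 1).2 hs
    simpa using this
  have htail : ‖∑' n : ℕ, 1 / (((n + 1 : ℕ) : ℂ) + 1) ^ z‖ ≤ π ^ 2 / 6 - 1 := by
    rw [← hval]
    refine tsum_of_norm_bounded hs2.hasSum fun n => ?_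
    simpa using hle (n + 1)
  have := norm_sub_norm_le (1 : ℂ) (-∑' n : ℕ, 1 / (((n + 1 : ℕ) : ℂ) + 1) ^ z)
  rw [sub_neg_eq_add, norm_neg, norm_one] at this
  simp only [Nat.cast_zero, zero_add, one_cpow, div_one]
  linarith

/-- The factor multiplying `cos (π z / 2)` in the functional equation for `ζ (1 - z)`. It has no zero
for `re z ≥ 1`, so that the zeros of `ζ (1 - z)` there are those of the cosine. -/
noncomputable def zetaFactor (z : ℂ) : ℂ := 2 * (2 * π) ^ (-z) * Gamma z * riemannZeta z

lemma ne_neg_nat {z : ℂ} (hz : 0 < z.re) (n : ℕ) : z ≠ -n := by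
  rintro rfl
  simp at hz
  have : (0:ℝ) ≤ n := n.cast_nonneg
  linarith

lemma riemannZeta_one_sub_eq {z : ℂ} (hz : 0 < z.re) (h1 : z ≠ 1) :
    riemannZeta (1 - z) = cos (π * z / 2) * zetaFactor z := by
  rw [riemannZeta_one_sub (ne_neg_nat hz) h1, zetaFactor]
  ring

lemma zetaFactor_ne_zero {z : ℂ} (hz : 1 ≤ z.re) : zetaFactor z ≠ 0 := by
  have : (2 * π : ℂ) ≠ 0 := by simp [Real.pi_ne_zero]
  refine mul_ne_zero (mul_ne_zero (mul_ne_zero two_ne_zero ?_) ?_) ?_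
  · simp [cpow_eq_zero_iff, this]
  · exact Gamma_ne_zero_of_re_pos (by linarith)
  · exact riemannZeta_ne_zero_of_one_le_re hz

/-- In every sector `|im z| ≤ K re z` the factor `zetaFactor z` grows at least exponentially, because
`Γ` beats any exponential there. -/
lemma exists_zetaFactor_ge (K : ℝ) (hK : 0 ≤ K) : ∃ X : ℝ, ∀ z : ℂ, X ≤ z.re → |z.im| ≤ K * z.re →
    Real.exp z.re ≤ ‖zetaFactor z‖ := by
  obtain ⟨C, hC, hG⟩ := exists_norm_inv_Gamma_le
  set δ : ℝ := 2 - π ^ 2 / 6 with hδ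
  have hδ0 : 0 < δ := by
    have := Real.pi_lt_d2
    have := Real.pi_pos
    rw [hδ]; nlinarith
  set B : ℝ := 2 * π * Real.exp (π * K) * Real.exp 1 with hB
  have hB0 : 0 < B := by positivity
  have hB1 : 1 ≤ B := by
    have e1 : 1 ≤ Real.exp (π * K) := Real.one_le_exp (by positivity)
    have e2 : 1 ≤ Real.exp 1 := Real.one_le_exp (by positivity)
    have e3 : 1 ≤ 2 * π := by linarith [Real.pi_gt_three]
    exact one_le_mul_of_one_le_of_one_le (one_le_mul_of_one_le_of_one_le e3 e1) e2
  have hev : ∀ᶠ m : ℕ in atTop, B ^ m / m.factorial < 2 * δ / (C * B ^ 2) :=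
    (FloorSemiring.tendsto_pow_div_factorial_atTop B).eventually_lt_const (by positivity)
  obtain ⟨M, hM⟩ := eventually_atTop.1 hev
  refine ⟨max 2 (M + 2), fun z hz ht => ?_⟩
  have hz2 : 2 ≤ z.re := (le_max_left _ _).trans hz
  have hzM : (M : ℝ) + 2 ≤ z.re := (le_max_right _ _).trans hz
  have hf2 : (M + 2 : ℕ) ≤ ⌊z.re⌋₊ := Nat.le_floor (by push_cast; exact hzM)
  obtain ⟨m, hm⟩ : ∃ m, ⌊z.re⌋₊ = m + 1 := ⟨⌊z.re⌋₊ - 1, by omega⟩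
  have hmM : M ≤ m := by omega
  have l1 : (m : ℝ) + 1 ≤ z.re := by
    have := Nat.floor_le (by linarith : 0 ≤ z.re); rw [hm] at this; exact_mod_cast this
  have l2 : z.re ≤ m + 2 := by
    have := (Nat.lt_floor_add_one z.re).le; rw [hm] at this; push_cast at this; linarith
  have hM' := hM m hmM
  have fpos : (0:ℝ) < m.factorial := by positivity
  rw [div_lt_div_iff₀ fpos (by positivity)] at hM'
  -- `z - m` lies in the strip `1 ≤ re ≤ 2`, and `Γ z` is at least `m! * Γ (z - m)` in norm.
  have g1 := factorial_mul_norm_Gamma_le (z - m) (by simp; linarith) m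
  rw [sub_add_cancel] at g1
  have g2 := hG (z - m) (by simp; linarith) (by simp; linarith)
  have g3 : Gamma (z - m) ≠ 0 := Gamma_ne_zero_of_re_pos (by simp; linarith)
  rw [norm_inv, inv_le_iff_one_le_mul₀ (norm_pos_iff.2 g3)] at g2
  simp only [sub_im, natCast_im, sub_zero] at g2
  have g4 : Real.exp (π * |z.im|) ≤ Real.exp (π * K) ^ z.re := by
    rw [← Real.exp_mul]
    apply Real.exp_le_exp.2
    rw [mul_assoc]
    have := Real.pi_pos
    gcongr
  have hcp : ‖((2 * π : ℂ)) ^ (-z)‖ = ((2 * π) ^ z.re)⁻¹ := by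
    have : (2 * π : ℂ) = ((2 * π : ℝ) : ℂ) := by push_cast; rfl
    rw [this, norm_cpow_eq_rpow_re_of_pos (by positivity), neg_re, Real.rpow_neg (by positivity)]
  rw [zetaFactor, norm_mul, norm_mul, norm_mul, hcp]
  have hzeta := norm_riemannZeta_ge hz2
  have hBz : B ^ z.re = (2 * π) ^ z.re * Real.exp (π * K) ^ z.re * Real.exp z.re := by
    rw [hB, Real.mul_rpow (by positivity) (by positivity),
      Real.mul_rpow (by positivity) (by positivity), Real.exp_one_rpow]
  have hBle : B ^ z.re ≤ B ^ m * B ^ 2 := by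
    rw [← pow_add, ← Real.rpow_natCast]
    exact Real.rpow_le_rpow_of_exponent_le hB1 (by push_cast; exact l2)
  have hGpos : 0 < ‖Gamma (z - m)‖ := norm_pos_iff.2 g3
  set P := (2 * π) ^ z.re
  have hP : 0 < P := by positivity
  set E := Real.exp (π * K) ^ z.re
  have hE : 0 < E := by positivity
  have h1 : C * (P * E * Real.exp z.re) ≤ 2 * δ * m.factorial := by
    rw [← hBz]
    calc C * B ^ z.re ≤ C * (B ^ m * B ^ 2) := by gcongr
      _ = B ^ m * (C * B ^ 2) := by ring
      _ ≤ _ := hM'.le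
  have h2 : 1 ≤ C * E * ‖Gamma (z - m)‖ := g2.trans (by gcongr)
  have h3 : Real.exp z.re * P ≤ 2 * ‖Gamma z‖ * δ := by
    have : C * E * (Real.exp z.re * P) ≤ C * E * (2 * ‖Gamma z‖ * δ) := by
      calc C * E * (Real.exp z.re * P) = C * (P * E * Real.exp z.re) := by ring
        _ ≤ 2 * δ * m.factorial := h1
        _ ≤ 2 * δ * m.factorial * (C * E * ‖Gamma (z - m)‖) :=
          le_mul_of_one_le_right (by positivity) h2
        _ = C * E * (2 * (m.factorial * ‖Gamma (z - m)‖) * δ) := by ring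
        _ ≤ _ := by gcongr
    exact le_of_mul_le_mul_left this (by positivity)
  calc Real.exp z.re ≤ 2 * ‖Gamma z‖ * δ / P := by rwa [le_div_iff₀ hP]
    _ = ‖(2:ℂ)‖ * P⁻¹ * ‖Gamma z‖ * δ := by simp; field_simp
    _ ≤ _ := by gcongr

/-- In the closed left half plane `ζ` has only the trivial zeros. -/
lemma riemannZeta_eq_zero_of_re_nonpos {s : ℂ} (hs : s.re ≤ 0) (h0 : riemannZeta s = 0) :
    ∃ n : ℕ, 1 ≤ n ∧ s = -2 * n := by
  have hs0 : s ≠ 0 := by rintro rfl; simp [riemannZeta_zero] at h0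
  have h := riemannZeta_one_sub_eq (z := 1 - s) (by simp; linarith) (by simpa using hs0)
  rw [sub_sub_cancel, h0, eq_comm, mul_eq_zero] at h
  have h' := h.resolve_right (zetaFactor_ne_zero (by simp; linarith))
  rw [cos_eq_zero_iff] at h'
  obtain ⟨k, hk⟩ := h'
  have hpi : (π : ℂ) ≠ 0 := ofReal_ne_zero.2 Real.pi_ne_zero
  have hk' : s = -2 * (k : ℂ) := by
    field_simp at hk
    linear_combination -hk
  have hk0 : 0 ≤ k := by
    have := congrArg re hk'
    simp at this
    have : (0:ℝ) ≤ k := by linarith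
    exact_mod_cast this
  lift k to ℕ using hk0
  refine ⟨k, ?_, by simpa using hk'⟩
  rcases Nat.eq_zero_or_pos k with rfl | h
  · simp at hk'; exact absurd hk' hs0
  · exact h

lemma riemannZeta_neg_two_mul_nat {n : ℕ} (hn : 1 ≤ n) : riemannZeta (-2 * (n : ℂ)) = 0 := by
  obtain ⟨m, rfl⟩ : ∃ m, n = m + 1 := ⟨n - 1, by omega⟩
  simpa using riemannZeta_neg_two_mul_nat_add_one m

/-- Differentiating the functional equation at the zero `z = 2n + 1` of the cosine. -/
lemma norm_deriv_riemannZeta {n : ℕ} (hn : 1 ≤ n) :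
    ‖deriv riemannZeta (-2 * (n : ℂ))‖ = π / 2 * ‖zetaFactor (2 * n + 1)‖ := by
  set z : ℂ := 2 * n + 1 with hz
  have hn' : (1:ℝ) ≤ n := by exact_mod_cast hn
  have hzre : z.re = 2 * n + 1 := by simp [hz]
  have hz1 : z ≠ 1 := by
    intro h; have := congrArg re h; rw [hzre] at this; simp at this; omega
  have hcos : cos (π * z / 2) = 0 := by
    rw [cos_eq_zero_iff]
    exact ⟨n, by rw [hz]; push_cast; ring⟩
  have hdz : DifferentiableAt ℂ zetaFactor z := by
    unfold zetaFactor
    have d1 := differentiableAt_Gamma z (ne_neg_nat (by rw [hzre]; positivity))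
    have d2 := differentiableAt_riemannZeta hz1
    have d3 : DifferentiableAt ℂ (fun z : ℂ => (2 * π : ℂ) ^ (-z)) z := by
      refine DifferentiableAt.const_cpow (by fun_prop) (Or.inl (by simp [Real.pi_ne_zero]))
    fun_prop
  have hc : HasDerivAt (fun z : ℂ => cos (π * z / 2)) (-sin (π * z / 2) * (π / 2)) z := by
    have : HasDerivAt (fun z : ℂ => π * z / 2) (π / 2 : ℂ) z := by
      simpa using ((hasDerivAt_id z).const_mul (π : ℂ)).div_const 2
    exact this.ccos
  have h1 := hc.mul hdz.hasDerivAt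
  rw [hcos, zero_mul, add_zero] at h1
  have h2 : HasDerivAt (fun z : ℂ => riemannZeta (1 - z)) (-sin (π * z / 2) * (π / 2) * zetaFactor z) z := by
    refine h1.congr_of_eventuallyEq ?_
    have o1 : {u : ℂ | 0 < u.re} ∈ 𝓝 z :=
      (isOpen_lt continuous_const continuous_re).mem_nhds (show 0 < z.re by rw [hzre]; positivity)
    filter_upwards [o1, isOpen_ne.mem_nhds hz1] with u hu hu1
    exact riemannZeta_one_sub_eq hu hu1
  have hz' : 1 - z = -2 * n := by rw [hz]; ring
  have h3 : HasDerivAt (fun z : ℂ => riemannZeta (1 - z)) (-deriv riemannZeta (1 - z)) z := by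
    have hd : DifferentiableAt ℂ riemannZeta (1 - z) := by
      apply differentiableAt_riemannZeta
      rw [hz']; intro h; have := congrArg re h; simp at this; linarith
    simpa using hd.hasDerivAt.comp_const_sub 1 z
  have h4 := h3.unique h2
  rw [hz'] at h4
  have hsin : ‖sin (π * z / 2)‖ = 1 := by
    have h := sin_sq_add_cos_sq (π * z / 2)
    rw [hcos] at h
    have : sin (π * z / 2) ^ 2 = 1 := by simpa using h
    rcases sq_eq_one_iff.1 this with h | h <;> simp [h]
  rw [← norm_neg, h4]
  simp [hsin, abs_of_pos Real.pi_pos]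

lemma deriv_riemannZeta_ne_zero {n : ℕ} (hn : 1 ≤ n) : deriv riemannZeta (-2 * (n : ℂ)) ≠ 0 := by
  rw [← norm_pos_iff, norm_deriv_riemannZeta hn]
  have := norm_pos_iff.2 (zetaFactor_ne_zero (z := 2 * n + 1) (by simp))
  have := Real.pi_pos
  positivity

/-! ### The integrand on the strip -/

/-- The integrand in the variable `u = v + I / 2`: then `v ^ 2 + I * v = u ^ 2 + 1 / 4` and
`cosh (π v) = -I * sinh (π u)`. In this variable it is an odd function. -/
noncomputable def stripFun (a w : ℝ) (u : ℂ) : ℂ :=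
  cexp ((u ^ 2 + 1 / 4) * (Real.log w : ℂ)) /
    (riemannZeta (4 * (a : ℂ) * (u ^ 2 + 1 / 4)) * (-I * sinh (π * u)))

lemma stripFun_neg (a w : ℝ) (u : ℂ) : stripFun a w (-u) = -stripFun a w u := by
  simp only [stripFun, neg_sq, mul_neg, sinh_neg, div_neg]

lemma stripFun_add_half_I (a w v : ℝ) : stripFun a w (v + ((1 / 2 : ℝ) : ℂ) * I) =
    cexp (((v : ℂ) ^ 2 + I * (v : ℂ)) * (Real.log w : ℂ)) /
        (riemannZeta (4 * (a : ℂ) * ((v : ℂ) ^ 2 + I * (v : ℂ))) * cosh ((π : ℂ) * (v : ℂ))) := by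
  have e1 : ((v : ℂ) + ((1 / 2 : ℝ) : ℂ) * I) ^ 2 + 1 / 4 = (v : ℂ) ^ 2 + I * v := by
    push_cast
    linear_combination (1 / 4 : ℂ) * I_sq
  have e2 : -I * sinh (π * ((v : ℂ) + ((1 / 2 : ℝ) : ℂ) * I)) = cosh (π * v) := by
    have : (π : ℂ) * ((v : ℂ) + ((1 / 2 : ℝ) : ℂ) * I) = π * v + (π / 2 : ℂ) * I := by
      push_cast; ring
    rw [this, sinh_add, cosh_mul_I, sinh_mul_I, cos_pi_div_two, sin_pi_div_two]
    linear_combination -cosh (π * v) * I_sq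
  rw [stripFun, e1, e2]

lemma re_sq_add_quarter (u : ℂ) : (u ^ 2 + 1 / 4).re = u.re ^ 2 - u.im ^ 2 + 1 / 4 := by
  simp [sq]

lemma im_sq_add_quarter (u : ℂ) : (u ^ 2 + 1 / 4).im = 2 * u.re * u.im := by
  simp [sq]; ring

lemma re_zetaArg (a : ℝ) (u : ℂ) :
    (4 * (a : ℂ) * (u ^ 2 + 1 / 4)).re = 4 * a * (u.re ^ 2 - u.im ^ 2 + 1 / 4) := by
  have : (4 * (a : ℂ)) = ((4 * a : ℝ) : ℂ) := by push_cast; rfl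
  rw [this, re_ofReal_mul, re_sq_add_quarter]

lemma im_zetaArg (a : ℝ) (u : ℂ) :
    (4 * (a : ℂ) * (u ^ 2 + 1 / 4)).im = 4 * a * (2 * u.re * u.im) := by
  have : (4 * (a : ℂ)) = ((4 * a : ℝ) : ℂ) := by push_cast; rfl
  rw [this, im_ofReal_mul, im_sq_add_quarter]

lemma sq_le_quarter {y : ℝ} (hy : |y| ≤ 1 / 2) : y ^ 2 ≤ 1 / 4 := by
  have := sq_le_sq' (abs_le.1 hy).1 (abs_le.1 hy).2
  norm_num at this ⊢
  linarith

lemma re_zetaArg_nonpos {a : ℝ} (ha : a < 0) {u : ℂ} (hu : |u.im| ≤ 1 / 2) :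
    (4 * (a : ℂ) * (u ^ 2 + 1 / 4)).re ≤ 4 * a * u.re ^ 2 := by
  rw [re_zetaArg]
  have := sq_le_quarter hu
  nlinarith

lemma zetaArg_ne_one {a : ℝ} (ha : a < 0) {u : ℂ} (hu : |u.im| ≤ 1 / 2) :
    4 * (a : ℂ) * (u ^ 2 + 1 / 4) ≠ 1 := by
  intro h
  have h1 := re_zetaArg_nonpos ha hu
  rw [h, one_re] at h1
  nlinarith [sq_nonneg u.re]

lemma eq_zero_of_sinh_eq_zero {u : ℂ} (hu : |u.im| ≤ 1 / 2) (h : sinh (π * u) = 0) : u = 0 := by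
  have h1 : sin (π * u * I) = 0 := by rw [sin_mul_I, h, zero_mul]
  rw [sin_eq_zero_iff] at h1
  obtain ⟨k, hk⟩ := h1
  have hpi : (π : ℂ) ≠ 0 := ofReal_ne_zero.2 Real.pi_ne_zero
  have h2 : u * I = k := mul_left_cancel₀ hpi (by linear_combination hk)
  have h3 : -u.im = k := by simpa using congrArg re h2
  have hk1 : |(k : ℝ)| < 1 := by rw [← h3, abs_neg]; linarith
  have hk0 : k = 0 := Int.abs_lt_one_iff.1 (by exact_mod_cast hk1)
  rw [hk0] at h2
  simpa using h2

lemma norm_numerator_le {w : ℝ} (hw0 : 0 < w) (hw1 : w ≤ 1) {s : ℂ} (hs : 0 ≤ s.re) :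
    ‖cexp (s * (Real.log w : ℂ))‖ ≤ 1 := by
  rw [norm_exp, re_mul_ofReal]
  exact Real.exp_le_one_iff.2 (mul_nonpos_of_nonneg_of_nonpos hs (Real.log_nonpos hw0.le hw1))

lemma norm_stripFun_le {a w : ℝ} (hw0 : 0 < w) (hw1 : w ≤ 1) {u : ℂ} (hu : |u.im| ≤ 1 / 2) :
    ‖stripFun a w u‖ ≤ 1 / (‖riemannZeta (4 * (a : ℂ) * (u ^ 2 + 1 / 4))‖ * ‖sinh (π * u)‖) := by
  rw [stripFun, norm_div, norm_mul, norm_mul, norm_neg, norm_I, one_mul]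
  gcongr
  apply norm_numerator_le hw0 hw1
  rw [re_sq_add_quarter]
  have := sq_le_quarter hu
  nlinarith [sq_nonneg u.re]

/-- Far out in the strip `|im u| ≤ 1 / 2` the zeta denominator dominates the cosine from its functional
equation: `1 - 4 a (u ^ 2 + 1 / 4)` stays in a sector around the positive axis. -/
lemma exists_norm_cos_le_zeta {a : ℝ} (ha : a < 0) : ∃ X : ℝ, 0 < X ∧ ∀ u : ℂ, |u.im| ≤ 1 / 2 →
    X ≤ |u.re| → ‖cos (π * (1 - 4 * (a : ℂ) * (u ^ 2 + 1 / 4)) / 2)‖ ≤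
      ‖riemannZeta (4 * (a : ℂ) * (u ^ 2 + 1 / 4))‖ := by
  obtain ⟨X, hX⟩ := exists_zetaFactor_ge (1 - 4 * a) (by linarith)
  refine ⟨1 + |X| / (-4 * a), by have : 0 < -4 * a := by linarith
                                 positivity, fun u hu hX' => ?_⟩
  set z : ℂ := 1 - 4 * (a : ℂ) * (u ^ 2 + 1 / 4) with hz
  have hb : 0 < -4 * a := by linarith
  have hq : 0 ≤ |X| / (-4 * a) := by positivity
  have hone : 1 ≤ |u.re| := by linarith
  have hsq : |u.re| ≤ u.re ^ 2 := by rw [← sq_abs]; nlinarith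
  have hzre : 1 + (-4 * a) * u.re ^ 2 ≤ z.re := by
    have := re_zetaArg_nonpos ha hu
    rw [hz, sub_re, one_re]; linarith
  have hzim : |z.im| ≤ (-4 * a) * |u.re| := by
    rw [hz, sub_im, one_im, im_zetaArg, zero_sub, abs_neg, abs_mul, abs_mul, abs_mul, abs_mul]
    rw [abs_of_neg ha, abs_two, abs_of_pos (by norm_num : (0:ℝ) < 4)]
    have := mul_le_mul_of_nonneg_left hu (abs_nonneg u.re)
    nlinarith
  have hXz : X ≤ z.re := by
    have h1 : |X| ≤ (-4 * a) * u.re ^ 2 := by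
      have : |X| / (-4 * a) ≤ u.re ^ 2 := by linarith
      rw [div_le_iff₀ hb] at this
      linarith
    linarith [le_abs_self X]
  have himz : |z.im| ≤ (1 - 4 * a) * z.re := by
    have : (-4 * a) * |u.re| ≤ (-4 * a) * u.re ^ 2 := by gcongr
    have hzpos : 0 ≤ z.re := by nlinarith [sq_nonneg u.re]
    nlinarith
  have hzre1 : 1 < z.re := by nlinarith
  have h1 := hX z hXz himz
  have hz1 : z ≠ 1 := by
    intro h; rw [h] at hzre1; simp at hzre1
  have h2 := riemannZeta_one_sub_eq (z := z) (by linarith) hz1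
  rw [show 1 - z = 4 * (a : ℂ) * (u ^ 2 + 1 / 4) by rw [hz]; ring] at h2
  rw [h2, norm_mul]
  exact le_mul_of_one_le_right (norm_nonneg _) ((Real.one_le_exp (by linarith)).trans h1)

lemma norm_sinh_ge (u : ℂ) : π * |u.re| ≤ ‖sinh (π * u)‖ := by
  refine le_trans ?_ (abs_sinh_re_le_norm_sinh _)
  rw [re_ofReal_mul, Real.abs_sinh, abs_mul, abs_of_pos Real.pi_pos]
  exact Real.self_le_sinh_iff.2 (by positivity)

/-- On the vertical segments `|re u| = R` the function `stripFun` is `O (1 / R)`, provided `R` is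
chosen such that `ζ` is evaluated at the odd integer `-(2 N + 1)` at the midpoint `u = ± R`. Close
to the midpoint the cosine is near `± 1`; elsewhere its argument has large imaginary part. -/
lemma exists_side_bound {a w : ℝ} (ha : a < 0) (hw0 : 0 < w) (hw1 : w ≤ 1) :
    ∃ X : ℝ, 0 < X ∧ ∀ (N : ℕ) (R : ℝ), X ≤ R → 4 * a * (R ^ 2 + 1 / 4) = -(2 * N + 1) →
      ∀ u : ℂ, |u.re| = R → |u.im| ≤ 1 / 2 → ‖stripFun a w u‖ ≤ 1 / R := by
  obtain ⟨X, hX0, hX⟩ := exists_norm_cos_le_zeta ha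
  refine ⟨max X (1 + 1 / (-a)), by positivity, fun N R hR hN u hur hui => ?_⟩
  have hb : 0 < -a := by linarith
  have hRX : X ≤ R := (le_max_left _ _).trans hR
  have hR1 : 1 + 1 / (-a) ≤ R := (le_max_right _ _).trans hR
  have hR0 : 0 < R := by linarith
  have hbR : 1 ≤ -a * R := by
    have : 1 / (-a) ≤ R := by linarith
    rw [div_le_iff₀ hb] at this
    linarith
  have hRone : 1 ≤ R := by
    have : 0 < 1 / (-a) := by positivity
    linarith
  have h1 := hX u hui (by rw [hur]; exact hRX)
  set z : ℂ := π * (1 - 4 * (a : ℂ) * (u ^ 2 + 1 / 4)) / 2 with hz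
  have hz' : z = ((π / 2 : ℝ) : ℂ) * (1 - 4 * (a : ℂ) * (u ^ 2 + 1 / 4)) := by
    rw [hz]; push_cast; ring
  have hur2 : u.re ^ 2 = R ^ 2 := by rw [← hur, sq_abs]
  have hzre : z.re = (N + 1) * π - (π / 2) * (-4 * a * u.im ^ 2) := by
    rw [hz', re_ofReal_mul, sub_re, one_re, re_zetaArg, hur2]
    linear_combination (-π / 2) * hN
  have hzim : |z.im| = (π / 2) * (8 * (-a) * R * |u.im|) := by
    rw [hz', im_ofReal_mul, sub_im, one_im, im_zetaArg, zero_sub, abs_mul, abs_neg, abs_mul,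
      abs_mul, abs_mul, abs_mul, hur, abs_of_neg ha, abs_two, abs_of_pos (by norm_num : (0:ℝ) < 4),
      abs_of_pos (by positivity : 0 < π / 2)]
    ring
  have hpi := Real.pi_gt_three
  have hpi4 := Real.pi_lt_four
  have hcos : 1 / 2 ≤ ‖cos z‖ := by
    by_cases hc : 1 ≤ 8 * (-a) * R * |u.im|
    · refine le_trans ?_ (abs_sinh_im_le_norm_cos z)
      rw [Real.abs_sinh, hzim]
      refine le_trans ?_ (Real.self_le_sinh_iff.2 (by positivity))
      nlinarith
    · push Not at hc
      refine le_trans ?_ (abs_cos_re_le_norm_cos z)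
      have hsmall : -4 * a * u.im ^ 2 ≤ 1 / 16 := by
        rw [← sq_abs]
        have hy := abs_nonneg u.im
        have h8 : |u.im| ≤ 1 / 8 := by nlinarith
        have h9 : -a * |u.im| ≤ 1 / 8 := by
          have : -a * |u.im| ≤ -a * |u.im| * R := le_mul_of_one_le_right (by positivity) hRone
          nlinarith
        nlinarith
      have hs0 : 0 ≤ -4 * a * u.im ^ 2 := by
        have : 0 ≤ -4 * a := by linarith
        positivity
      have e : |Real.cos z.re| = |Real.cos ((π / 2) * (-4 * a * u.im ^ 2))| := by
        rw [hzre, ← Nat.cast_succ, Real.cos_nat_mul_pi_sub, abs_mul, abs_pow, abs_neg, abs_one,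
          one_pow, one_mul]
      rw [e]
      refine le_trans ?_ (le_abs_self _)
      refine le_trans ?_ (Real.one_sub_sq_div_two_le_cos)
      have : (π / 2) * (-4 * a * u.im ^ 2) ≤ 1 := by nlinarith
      have h0 : 0 ≤ (π / 2) * (-4 * a * u.im ^ 2) := by positivity
      nlinarith
  have hsinh : π * R ≤ ‖sinh (π * u)‖ := hur ▸ norm_sinh_ge u
  refine (norm_stripFun_le hw0 hw1 hui).trans ?_
  apply one_div_le_one_div_of_le hR0
  calc R ≤ 1 / 2 * (π * R) := by nlinarith
    _ ≤ _ := by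
      gcongr
      exact hcos.trans h1

lemma differentiableAt_stripFun {a : ℝ} (w : ℝ) (ha : a < 0) {u : ℂ} (hu : |u.im| ≤ 1 / 2)
    (hz : riemannZeta (4 * (a : ℂ) * (u ^ 2 + 1 / 4)) ≠ 0) (h0 : u ≠ 0) :
    DifferentiableAt ℂ (stripFun a w) u := by
  have hs : sinh (π * u) ≠ 0 := fun h => h0 (eq_zero_of_sinh_eq_zero hu h)
  have hd : DifferentiableAt ℂ (fun u : ℂ => riemannZeta (4 * (a : ℂ) * (u ^ 2 + 1 / 4))) u :=
    DifferentiableAt.comp (f := fun u : ℂ => 4 * (a : ℂ) * (u ^ 2 + 1 / 4)) u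
      (differentiableAt_riemannZeta (zetaArg_ne_one ha hu)) (by fun_prop)
  unfold stripFun
  refine DifferentiableAt.div (by fun_prop) (hd.mul (by fun_prop)) ?_
  exact mul_ne_zero hz (mul_ne_zero (neg_ne_zero.2 I_ne_zero) hs)

/-- On the line `im u = 1 / 2` the zeta factor is bounded below by one far out, and `cosh` provides the
decay. It has no zero on the line, because its argument is real only at `v = 0`, where it is `0`. -/
lemma integrable_stripFun {a w : ℝ} (ha : a < 0) (hw0 : 0 < w) (hw1 : w ≤ 1) :
    Integrable (fun v : ℝ => stripFun a w (v + ((1 / 2 : ℝ) : ℂ) * I)) := by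
  have him : ∀ v : ℝ, ((v : ℂ) + ((1 / 2 : ℝ) : ℂ) * I).im = 1 / 2 := by intro v; simp
  have hre : ∀ v : ℝ, ((v : ℂ) + ((1 / 2 : ℝ) : ℂ) * I).re = v := by intro v; simp
  have habs : ∀ v : ℝ, |((v : ℂ) + ((1 / 2 : ℝ) : ℂ) * I).im| ≤ 1 / 2 := by
    intro v; rw [him]; norm_num
  have hcont : Continuous (fun v : ℝ => stripFun a w (v + ((1 / 2 : ℝ) : ℂ) * I)) := by
    rw [continuous_iff_continuousAt]
    intro v
    refine ContinuousAt.comp (f := fun v : ℝ => (v : ℂ) + ((1 / 2 : ℝ) : ℂ) * I)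
      (differentiableAt_stripFun w ha (habs v) ?_ ?_).continuousAt (by fun_prop)
    · intro h
      have hle := re_zetaArg_nonpos ha (habs v)
      have hle' := re_zetaArg a ((v : ℂ) + ((1 / 2 : ℝ) : ℂ) * I)
      have him' := im_zetaArg a ((v : ℂ) + ((1 / 2 : ℝ) : ℂ) * I)
      rw [hre] at hle
      obtain ⟨n, hn, hs⟩ := riemannZeta_eq_zero_of_re_nonpos
        (hle.trans (by nlinarith [sq_nonneg v])) h
      rw [hs, hre, him] at hle' him'
      simp at hle' him'
      rcases him' with h' | h'
      · linarith
      · rw [h'] at hle'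
        norm_num at hle'
        omega
    · intro h
      have := him v
      rw [h] at this
      norm_num at this
  obtain ⟨X, hX0, hX⟩ := exists_norm_cos_le_zeta ha
  refine hcont.locallyIntegrable.integrable_of_isBigO_cocompact (g := fun v : ℝ => (1 + v ^ 2)⁻¹)
    ?_ (integrable_inv_one_add_sq.integrableAtFilter _)
  refine Asymptotics.IsBigO.of_bound 1 ?_
  have hev : ∀ᶠ v : ℝ in cocompact ℝ, max X (1 + 1 / (-a)) ≤ ‖v‖ :=
    (tendsto_norm_cocompact_atTop).eventually_ge_atTop _
  filter_upwards [hev] with v hv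
  rw [Real.norm_eq_abs] at hv
  have hb : 0 < -a := by linarith
  have hvX : X ≤ |v| := (le_max_left _ _).trans hv
  have hv1 : 1 + 1 / (-a) ≤ |v| := (le_max_right _ _).trans hv
  have hpi := Real.pi_gt_three
  have hz1 : 1 ≤ ‖riemannZeta (4 * (a : ℂ) * (((v : ℂ) + ((1 / 2 : ℝ) : ℂ) * I) ^ 2 + 1 / 4))‖ := by
    refine le_trans ?_ (hX _ (habs v) (by rw [hre]; exact hvX))
    refine le_trans ?_ (abs_sinh_im_le_norm_cos _)
    set u := (v : ℂ) + ((1 / 2 : ℝ) : ℂ) * I with hu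
    have e : (π * (1 - 4 * (a : ℂ) * (u ^ 2 + 1 / 4)) / 2).im = 2 * π * (-a) * v := by
      have : π * (1 - 4 * (a : ℂ) * (u ^ 2 + 1 / 4)) / 2 =
        ((π / 2 : ℝ) : ℂ) * (1 - 4 * (a : ℂ) * (u ^ 2 + 1 / 4)) := by push_cast; ring
      rw [this, im_ofReal_mul, sub_im, one_im, im_zetaArg, him, hre]
      ring
    rw [e, Real.abs_sinh]
    refine le_trans ?_ (Real.self_le_sinh_iff.2 (abs_nonneg _))
    rw [abs_mul, abs_of_pos (by positivity)]
    have : 1 / (-a) ≤ |v| := by linarith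
    rw [div_le_iff₀ hb] at this
    nlinarith
  rw [stripFun_add_half_I, norm_div, norm_mul, one_mul]
  have e1 : ((v : ℂ) + ((1 / 2 : ℝ) : ℂ) * I) ^ 2 + 1 / 4 = (v : ℂ) ^ 2 + I * v := by
    push_cast
    linear_combination (1 / 4 : ℂ) * I_sq
  rw [e1] at hz1
  have hnum : ‖cexp (((v : ℂ) ^ 2 + I * (v : ℂ)) * (Real.log w : ℂ))‖ ≤ 1 := by
    apply norm_numerator_le hw0 hw1
    simp [sq]
    nlinarith
  have hcosh : 1 + v ^ 2 ≤ ‖cosh ((π : ℂ) * v)‖ := by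
    rw [← ofReal_mul, ← ofReal_cosh, norm_real, Real.norm_of_nonneg (Real.cosh_pos _).le]
    have h1 := Real.cosh_sq (π * v / 2)
    have h2 := Real.cosh_two_mul (π * v / 2)
    rw [show 2 * (π * v / 2) = π * v by ring] at h2
    have h3 : |π * v / 2| ≤ |Real.sinh (π * v / 2)| := by
      rw [Real.abs_sinh]; exact Real.self_le_sinh_iff.2 (abs_nonneg _)
    have h4 := sq_le_sq.2 h3
    have h5 : 9 * v ^ 2 ≤ π ^ 2 * v ^ 2 :=
      mul_le_mul_of_nonneg_right (by nlinarith) (sq_nonneg v)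
    rw [h2, h1]
    nlinarith [sq_nonneg v]
  rw [Real.norm_of_nonneg (by positivity), ← one_div]
  have : 1 + v ^ 2 ≤ ‖riemannZeta (4 * (a : ℂ) * ((v : ℂ) ^ 2 + I * (v : ℂ)))‖ *
      ‖cosh ((π : ℂ) * v)‖ := by
    calc 1 + v ^ 2 = 1 * (1 + v ^ 2) := by ring
      _ ≤ _ := by gcongr
  gcongr

/-! ### Poles and residues -/

lemma tendsto_sub_mul_div {N D : ℂ → ℂ} {p D' : ℂ} (hN : ContinuousAt N p) (hD : HasDerivAt D D' p)
    (h0 : D p = 0) (hD' : D' ≠ 0) :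
    Tendsto (fun u => (u - p) * (N u / D u)) (𝓝[≠] p) (𝓝 (N p / D')) := by
  have h1 := hD.tendsto_slope
  have h2 := (hN.tendsto.mono_left nhdsWithin_le_nhds).div h1 hD'
  refine h2.congr' ?_
  filter_upwards [self_mem_nhdsWithin] with u hu
  have : u - p ≠ 0 := sub_ne_zero.2 hu
  simp only [slope_def_field, h0, sub_zero, Pi.div_apply]
  rw [div_div_eq_mul_div]
  ring

/-- The square root `√(-a² - 2an)`, principal branch. -/
noncomputable def poleRoot (a : ℝ) (n : ℕ) : ℂ :=
  (-(a : ℂ) ^ 2 - 2 * (a : ℂ) * (n : ℂ)) ^ ((1 : ℂ) / 2)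

/-- A solution `u` of `4 a (u ^ 2 + 1 / 4) = -2 n`. For `n ≥ 1` the points `± pole a n` are the poles of
`stripFun` coming from the trivial zero `-2 n` of `ζ`. -/
noncomputable def pole (a : ℝ) (n : ℕ) : ℂ := poleRoot a n / (2 * (a : ℂ))

/-- The summand of the series, with the hyperbolic sine, for arbitrary `n`. -/
noncomputable def seriesTerm (a w : ℝ) (n : ℕ) : ℂ :=
  cexp ((-((n : ℂ) / (2 * (a : ℂ)))) * (Real.log w : ℂ)) /
    (deriv riemannZeta (-2 * (n : ℂ)) * poleRoot a n * sinh ((π : ℂ) * poleRoot a n / (2 * (a : ℂ))))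

lemma poleRoot_sq (a : ℝ) (n : ℕ) : poleRoot a n ^ 2 = -(a : ℂ) ^ 2 - 2 * (a : ℂ) * (n : ℂ) := by
  have := cpow_nat_inv_pow (-(a : ℂ) ^ 2 - 2 * (a : ℂ) * (n : ℂ)) two_ne_zero
  rw [poleRoot, one_div]
  exact_mod_cast this

lemma pole_sq {a : ℝ} (ha : a < 0) (n : ℕ) : pole a n ^ 2 = ((-1 / 4 - n / (2 * a) : ℝ) : ℂ) := by
  have : (a : ℂ) ≠ 0 := ofReal_ne_zero.2 ha.ne
  rw [pole, div_pow, poleRoot_sq]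
  push_cast
  field_simp
  ring

lemma zetaArg_pole {a : ℝ} (ha : a < 0) (n : ℕ) :
    4 * (a : ℂ) * (pole a n ^ 2 + 1 / 4) = -2 * n := by
  have : (a : ℂ) ≠ 0 := ofReal_ne_zero.2 ha.ne
  rw [pole_sq ha]
  push_cast
  field_simp
  ring

lemma pole_ne_zero {a : ℝ} (ha : a < 0) (hint : ∀ n : ℕ, 0 < n → a ≠ -(n : ℝ)) {n : ℕ}
    (hn : 1 ≤ n) : pole a n ≠ 0 := by
  intro h
  have h1 := zetaArg_pole ha n
  rw [h] at h1
  refine hint (2 * n) (by omega) ?_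
  have h2 : (a : ℂ) = ((-(2 * n : ℕ) : ℝ) : ℂ) := by
    push_cast
    linear_combination h1
  exact_mod_cast h2

/-- The poles with `1 ≤ n ≤ N` lie inside the `N`-th rectangle. They are real or purely imaginary, as
their square is real. -/
lemma pole_mem {a : ℝ} (ha : a < 0) {n N : ℕ} {R : ℝ} (hR : 0 < R)
    (hN : 4 * a * (R ^ 2 + 1 / 4) = -(2 * N + 1)) (hn : 1 ≤ n) (hnN : n ≤ N) :
    |(pole a n).re| < R ∧ |(pole a n).im| < 1 / 2 := by
  have h := pole_sq ha n
  set p := pole a n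
  have hb : 0 < -a := by linarith
  have hre : p.re ^ 2 - p.im ^ 2 = -1 / 4 - n / (2 * a) := by
    have := congrArg re h
    rw [ofReal_re] at this
    rw [← this]; simp [sq]
  have him : p.re * p.im = 0 := by
    have := congrArg im h
    rw [ofReal_im] at this
    simp only [sq, mul_im] at this
    linarith [mul_comm p.re p.im]
  have hlow : 0 < - (n / (2 * a)) := by
    rw [← div_neg]
    have : (0:ℝ) < n := by exact_mod_cast hn
    have : 0 < -(2 * a) := by linarith
    positivity
  have hup : - (n / (2 * a)) < R ^ 2 + 1 / 4 := by
    have e : R ^ 2 + 1 / 4 = (2 * N + 1) / (4 * (-a)) := by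
      rw [eq_div_iff (by linarith)]; linarith
    have hnN' : (n : ℝ) ≤ N := by exact_mod_cast hnN
    rw [e, ← div_neg, div_lt_div_iff₀ (by linarith) (by linarith)]
    nlinarith
  rcases mul_eq_zero.1 him with h0 | h0
  · rw [h0] at hre ⊢
    refine ⟨by simpa using hR, ?_⟩
    apply abs_lt_of_sq_lt_sq _ (by norm_num)
    linarith
  · rw [h0] at hre ⊢
    refine ⟨?_, by norm_num⟩
    apply abs_lt_of_sq_lt_sq _ hR.le
    linarith

/-- The denominator of `stripFun`. -/
noncomputable def stripDen (a : ℝ) (u : ℂ) : ℂ :=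
  riemannZeta (4 * (a : ℂ) * (u ^ 2 + 1 / 4)) * (-I * sinh (π * u))

lemma hasDerivAt_stripDen {a : ℝ} (ha : a < 0) {u : ℂ} (hu : |u.im| ≤ 1 / 2) :
    HasDerivAt (stripDen a) (deriv riemannZeta (4 * (a : ℂ) * (u ^ 2 + 1 / 4)) * (8 * a * u) *
      (-I * sinh (π * u)) + riemannZeta (4 * (a : ℂ) * (u ^ 2 + 1 / 4)) *
      (-I * (cosh (π * u) * π))) u := by
  have h1 : HasDerivAt (fun u : ℂ => 4 * (a : ℂ) * (u ^ 2 + 1 / 4)) (8 * a * u) u := by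
    have := ((hasDerivAt_pow 2 u).add_const (1 / 4 : ℂ)).const_mul (4 * (a : ℂ))
    refine this.congr_deriv ?_
    norm_num
    ring
  have h2 := (differentiableAt_riemannZeta (zetaArg_ne_one ha hu)).hasDerivAt.comp u h1
  have h3 : HasDerivAt (fun u : ℂ => π * u) (π : ℂ) u := by
    simpa using (hasDerivAt_id u).const_mul (π : ℂ)
  exact h2.mul (h3.csinh.const_mul (-I))

/-- The residue of `stripFun` at a simple zero `u` of its denominator. -/
noncomputable def stripRes (a w : ℝ) (u : ℂ) : ℂ :=
  cexp ((u ^ 2 + 1 / 4) * (Real.log w : ℂ)) / deriv (stripDen a) u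

lemma tendsto_stripRes {a : ℝ} (w : ℝ) (ha : a < 0) {u : ℂ} (hu : |u.im| ≤ 1 / 2)
    (h0 : stripDen a u = 0) (h1 : deriv (stripDen a) u ≠ 0) :
    Tendsto (fun x => (x - u) * stripFun a w x) (𝓝[≠] u) (𝓝 (stripRes a w u)) := by
  have hd := (hasDerivAt_stripDen ha hu).differentiableAt.hasDerivAt
  exact tendsto_sub_mul_div (N := fun u : ℂ => cexp ((u ^ 2 + 1 / 4) * (Real.log w : ℂ)))
    (by fun_prop) hd h0 h1

lemma deriv_stripDen_zero {a : ℝ} (ha : a < 0) :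
    deriv (stripDen a) 0 = riemannZeta a * (-I * π) := by
  rw [(hasDerivAt_stripDen ha (by simp)).deriv]
  have : 4 * (a : ℂ) * (0 ^ 2 + 1 / 4) = a := by ring
  rw [this]
  simp

lemma deriv_stripDen_pole {a : ℝ} (ha : a < 0) {n : ℕ} (hn : 1 ≤ n) {u : ℂ}
    (hu : |u.im| ≤ 1 / 2) (h : u = pole a n ∨ u = -pole a n) :
    deriv (stripDen a) u = deriv riemannZeta (-2 * (n : ℂ)) * (4 * poleRoot a n) *
      (-I * sinh (π * poleRoot a n / (2 * a))) := by
  have ha' : (a : ℂ) ≠ 0 := ofReal_ne_zero.2 ha.ne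
  have hsq : u ^ 2 = pole a n ^ 2 := by rcases h with rfl | rfl <;> ring
  rw [(hasDerivAt_stripDen ha hu).deriv, hsq, zetaArg_pole ha, riemannZeta_neg_two_mul_nat hn]
  have e1 : poleRoot a n = 2 * a * pole a n := by rw [pole]; field_simp
  have e2 : π * poleRoot a n / (2 * a) = π * pole a n := by rw [pole]; ring
  rw [e2, e1]
  rcases h with rfl | rfl
  · ring
  · rw [mul_neg (π : ℂ), sinh_neg]; ring

/-- The residue theorem for `stripFun` on the rectangle `[-R, R] × [-1/2, 1/2]`. By oddness the
integral over the bottom side is minus that over the top side, so both contribute equally. -/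
lemma integral_stripFun_eq {a w : ℝ} (ha : a < 0) (hint : ∀ n : ℕ, 0 < n → a ≠ -(n : ℝ))
    {N : ℕ} {R : ℝ} (hR : 0 < R) (hN : 4 * a * (R ^ 2 + 1 / 4) = -(2 * N + 1)) :
    ∫ x : ℝ in -R..R, stripFun a w (x + ((1 / 2 : ℝ) : ℂ) * I) =
      cexp (((1 : ℂ) / 4) * (Real.log w : ℂ)) / riemannZeta (a : ℂ) +
      (π / 2) * ∑ n ∈ Finset.Icc 1 N, seriesTerm a w n +
      (I / 2) * ((∫ y : ℝ in (-(1/2))..(1/2), stripFun a w (R + y * I)) -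
        ∫ y : ℝ in (-(1/2))..(1/2), stripFun a w ((-R : ℝ) + y * I)) := by
  classical
  have ha' : (a : ℂ) ≠ 0 := ofReal_ne_zero.2 ha.ne
  have hpi : (π : ℂ) ≠ 0 := ofReal_ne_zero.2 Real.pi_ne_zero
  have hza : riemannZeta a ≠ 0 := by
    intro h
    obtain ⟨n, hn, hs⟩ := riemannZeta_eq_zero_of_re_nonpos (by simpa using ha.le) h
    refine hint (2 * n) (by omega) ?_
    have : (a : ℂ) = ((-(2 * n : ℕ) : ℝ) : ℂ) := by rw [hs]; push_cast; ring
    exact_mod_cast this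
  set S1 := (Finset.Icc 1 N).image (pole a) with hS1
  set S2 := (Finset.Icc 1 N).image (fun n => -pole a n) with hS2
  set S : Finset ℂ := insert 0 (S1 ∪ S2) with hS
  have hpsq : ∀ m n : ℕ, pole a m ^ 2 = pole a n ^ 2 → m = n := by
    intro m n h
    have h1 := zetaArg_pole ha m
    rw [h, zetaArg_pole ha n] at h1
    have : (n : ℂ) = m := by linear_combination (-1 / 2 : ℂ) * h1
    exact_mod_cast this.symm
  have hmem : ∀ u ∈ S, u = 0 ∨ ∃ n, 1 ≤ n ∧ n ≤ N ∧ (u = pole a n ∨ u = -pole a n) := by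
    intro u hu
    simp only [hS, hS1, hS2, Finset.mem_insert, Finset.mem_union, Finset.mem_image,
      Finset.mem_Icc] at hu
    rcases hu with h | ⟨n, hn, h⟩ | ⟨n, hn, h⟩
    · exact Or.inl h
    · exact Or.inr ⟨n, hn.1, hn.2, Or.inl h.symm⟩
    · exact Or.inr ⟨n, hn.1, hn.2, Or.inr h.symm⟩
  have hin : ∀ u ∈ S, |u.re| < R ∧ |u.im| < 1 / 2 := by
    intro u hu
    rcases hmem u hu with rfl | ⟨n, h1, h2, rfl | rfl⟩
    · simp [hR]
    · exact pole_mem ha hR hN h1 h2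
    · simpa using pole_mem ha hR hN h1 h2
  have hres := rectInt_residue (z := ⟨-R, -(1/2)⟩) (w := ⟨R, 1/2⟩) (by simp; linarith)
    (by norm_num) S (stripRes a w) (stripFun a w)
    (fun u hu => ⟨abs_lt.1 (hin u hu).1, abs_lt.1 (hin u hu).2⟩)
    (by
      intro u hur hui huS
      have hi : |u.im| ≤ 1 / 2 := abs_le.2 hui
      have hr : |u.re| ≤ R := abs_le.2 hur
      refine differentiableAt_stripFun w ha hi ?_ ?_
      · intro h
        have hle := re_zetaArg_nonpos ha hi
        obtain ⟨n, hn, hs⟩ := riemannZeta_eq_zero_of_re_nonpos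
          (hle.trans (by nlinarith [sq_nonneg u.re])) h
        have hnN : n ≤ N := by
          have hre := re_zetaArg a u
          rw [hs] at hre
          simp at hre
          have h2 : u.re ^ 2 ≤ R ^ 2 := sq_le_sq' hur.1 hur.2
          have h3 : 4 * a * (R ^ 2 + 1 / 4) ≤ -(2 * n) := by
            rw [hre]
            nlinarith [sq_nonneg u.im]
          rw [hN] at h3
          have : (n : ℝ) < N + 1 := by linarith
          exact Nat.lt_succ_iff.1 (by exact_mod_cast this)
        have hsq : u ^ 2 = pole a n ^ 2 := by
          have := hs.trans (zetaArg_pole ha n).symm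
          have := mul_left_cancel₀ (mul_ne_zero (by norm_num : (4 : ℂ) ≠ 0) ha') this
          linear_combination this
        apply huS
        simp only [hS, hS1, hS2, Finset.mem_insert, Finset.mem_union, Finset.mem_image,
          Finset.mem_Icc]
        rcases sq_eq_sq_iff_eq_or_eq_neg.1 hsq with h | h
        · exact Or.inr (Or.inl ⟨n, ⟨hn, hnN⟩, h.symm⟩)
        · exact Or.inr (Or.inr ⟨n, ⟨hn, hnN⟩, h.symm⟩)
      · rintro rfl
        exact huS (by simp [hS]))
    (by
      intro u hu
      have hi : |u.im| ≤ 1 / 2 := (hin u hu).2.le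
      rcases hmem u hu with rfl | ⟨n, h1, h2, h⟩
      · refine tendsto_stripRes w ha hi (by simp [stripDen]) ?_
        rw [deriv_stripDen_zero ha]
        exact mul_ne_zero hza (mul_ne_zero (neg_ne_zero.2 I_ne_zero) hpi)
      · have hsq : u ^ 2 = pole a n ^ 2 := by rcases h with rfl | rfl <;> ring
        have hp0 := pole_ne_zero ha hint h1
        refine tendsto_stripRes w ha hi ?_ ?_
        · rw [stripDen, hsq, zetaArg_pole ha, riemannZeta_neg_two_mul_nat h1, zero_mul]
        · rw [deriv_stripDen_pole ha h1 hi h]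
          have e1 : poleRoot a n = 2 * a * pole a n := by rw [pole]; field_simp
          have e2 : π * poleRoot a n / (2 * a) = π * pole a n := by rw [pole]; ring
          have hs : sinh (π * pole a n) ≠ 0 := fun h =>
            hp0 (eq_zero_of_sinh_eq_zero (pole_mem ha hR hN h1 h2).2.le h)
          rw [e2, e1]
          exact mul_ne_zero (mul_ne_zero (deriv_riemannZeta_ne_zero h1) (mul_ne_zero (by norm_num : (4 : ℂ) ≠ 0)
            (mul_ne_zero (mul_ne_zero two_ne_zero ha') hp0)))
            (mul_ne_zero (neg_ne_zero.2 I_ne_zero) hs))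
  -- The residue is even in `u`, so `± pole a n` contribute the same amount.
  have hterm : ∀ n ∈ Finset.Icc 1 N, ∀ u : ℂ, (u = pole a n ∨ u = -pole a n) →
      stripRes a w u = I / 4 * seriesTerm a w n := by
    intro n hn u h
    rw [Finset.mem_Icc] at hn
    have hm := pole_mem ha hR hN hn.1 hn.2
    have hi : |u.im| ≤ 1 / 2 := by
      rcases h with rfl | rfl
      · exact hm.2.le
      · simpa using hm.2.le
    have hsq : u ^ 2 = pole a n ^ 2 := by rcases h with rfl | rfl <;> ring
    have e : pole a n ^ 2 + 1 / 4 = -((n : ℂ) / (2 * a)) := by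
      rw [pole_sq ha]; push_cast; ring
    rw [stripRes, deriv_stripDen_pole ha hn.1 hi h, hsq, e, seriesTerm]
    generalize deriv riemannZeta (-2 * (n : ℂ)) = A
    generalize sinh (π * poleRoot a n / (2 * a)) = B
    generalize poleRoot a n = C
    have hI : (-I)⁻¹ = I := by simp
    rw [show A * (4 * C) * (-I * B) = (A * C * B) * (4 * -I) by ring, ← div_div, div_eq_mul_inv _ (4 * -I),
      mul_inv, hI]
    ring
  have hsum : ∑ u ∈ S, stripRes a w u =
      I / π * (cexp (((1 : ℂ) / 4) * (Real.log w : ℂ)) / riemannZeta a) +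
      I / 2 * ∑ n ∈ Finset.Icc 1 N, seriesTerm a w n := by
    rw [hS, Finset.sum_insert, Finset.sum_union, hS1, hS2, Finset.sum_image, Finset.sum_image,
      Finset.sum_congr rfl (fun n hn => hterm n hn _ (Or.inl rfl)),
      Finset.sum_congr rfl (fun n hn => hterm n hn _ (Or.inr rfl)), ← Finset.mul_sum]
    · rw [stripRes, deriv_stripDen_zero ha]
      have : (0 : ℂ) ^ 2 + 1 / 4 = 1 / 4 := by ring
      rw [this]
      have hI : (-I)⁻¹ = I := by simp
      rw [← div_div, div_eq_mul_inv _ (-I * π), mul_inv, hI]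
      ring
    · intro m _ n _ h
      exact hpsq m n (by simp only [neg_inj] at h; rw [h])
    · intro m _ n _ h
      exact hpsq m n (by rw [h])
    · rw [Finset.disjoint_left]
      intro u h1 h2
      simp only [hS1, hS2, Finset.mem_image, Finset.mem_Icc] at h1 h2
      obtain ⟨m, hm, rfl⟩ := h1
      obtain ⟨n, hn, h⟩ := h2
      have hmn := hpsq n m (by rw [← h]; ring)
      rw [hmn] at h
      apply pole_ne_zero ha hint hm.1
      linear_combination (-1 / 2 : ℂ) * h
    · simp only [hS1, hS2, Finset.mem_union, Finset.mem_image, Finset.mem_Icc]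
      rintro (⟨n, hn, h⟩ | ⟨n, hn, h⟩)
      · exact pole_ne_zero ha hint hn.1 h
      · exact pole_ne_zero ha hint hn.1 (neg_eq_zero.1 h)
  rw [hsum] at hres
  have hbot : ∫ x : ℝ in -R..R, stripFun a w (x + ((-(1 / 2) : ℝ) : ℂ) * I) =
      -∫ x : ℝ in -R..R, stripFun a w (x + ((1 / 2 : ℝ) : ℂ) * I) := by
    have h := intervalIntegral.integral_comp_neg (a := -R) (b := R)
      (fun x : ℝ => stripFun a w (x + ((1 / 2 : ℝ) : ℂ) * I))
    rw [neg_neg] at h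
    rw [← h, ← intervalIntegral.integral_neg]
    refine intervalIntegral.integral_congr fun x _ => ?_
    rw [← stripFun_neg]
    congr 1
    push_cast; ring
  simp only [rectInt] at hres
  rw [hbot] at hres
  have hII : 2 * π * I * (I / π * (cexp (((1 : ℂ) / 4) * (Real.log w : ℂ)) / riemannZeta a) +
      I / 2 * ∑ n ∈ Finset.Icc 1 N, seriesTerm a w n) =
      -2 * (cexp (((1 : ℂ) / 4) * (Real.log w : ℂ)) / riemannZeta a) -
      π * ∑ n ∈ Finset.Icc 1 N, seriesTerm a w n := by
    field_simp
    rw [I_sq]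
    ring
  rw [hII] at hres
  linear_combination (-1 / 2 : ℂ) * hres

lemma norm_numerator_seriesTerm_le {a w : ℝ} (ha : a < 0) (hw0 : 0 < w) (hw1 : w ≤ 1) (n : ℕ) :
    ‖cexp ((-((n : ℂ) / (2 * (a : ℂ)))) * (Real.log w : ℂ))‖ ≤ 1 := by
  apply norm_numerator_le hw0 hw1
  have : (-((n : ℂ) / (2 * (a : ℂ)))) = ((n / (2 * (-a)) : ℝ) : ℂ) := by
    push_cast
    rw [mul_neg, div_neg]
  rw [this, ofReal_re]
  have : 0 < -a := by linarith
  positivity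

/-- The series converges absolutely since the derivative of `ζ` at `-2n` grows at least like `exp n`. -/
lemma summable_seriesTerm {a w : ℝ} (ha : a < 0) (hw0 : 0 < w) (hw1 : w ≤ 1) :
    Summable (seriesTerm a w) := by
  obtain ⟨X, hX⟩ := exists_zetaFactor_ge 0 le_rfl
  refine Summable.of_norm_bounded_eventually_nat Real.summable_exp_neg_nat ?_
  obtain ⟨M, hM⟩ := exists_nat_ge (max X (-a + 2))
  filter_upwards [eventually_ge_atTop (M + 1)] with n hn
  have hn1 : 1 ≤ n := by omega
  have hnM : (M : ℝ) + 1 ≤ n := by exact_mod_cast hn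
  have hXn : X ≤ n := by linarith [le_max_left X (-a + 2)]
  have han : -a + 2 ≤ n := by linarith [le_max_right X (-a + 2)]
  have hn0 : (0:ℝ) ≤ n := n.cast_nonneg
  have hpi := Real.pi_gt_three
  have hz : Real.exp n ≤ ‖deriv riemannZeta (-2 * (n : ℂ))‖ := by
    rw [norm_deriv_riemannZeta hn1]
    have h1 := hX (2 * n + 1) (by simp; linarith) (by simp)
    have h2 : Real.exp n ≤ Real.exp (2 * n + 1 : ℂ).re := Real.exp_le_exp.2 (by simp; linarith)
    have h3 := h2.trans h1
    have := Real.exp_pos n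
    nlinarith
  have hq : 0 ≤ -a ^ 2 - 2 * a * n := by nlinarith
  have hroot : poleRoot a n = ((Real.sqrt (-a ^ 2 - 2 * a * n) : ℝ) : ℂ) := by
    rw [poleRoot, Real.sqrt_eq_rpow, ofReal_cpow hq]
    push_cast
    rfl
  have hprod : 1 ≤ ‖poleRoot a n‖ * ‖sinh ((π : ℂ) * poleRoot a n / (2 * (a : ℂ)))‖ := by
    set q := Real.sqrt (-a ^ 2 - 2 * a * n) with hqdef
    have hq0 : 0 ≤ q := Real.sqrt_nonneg _
    have hqq : q ^ 2 = -a ^ 2 - 2 * a * n := Real.sq_sqrt hq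
    have e : (π : ℂ) * poleRoot a n / (2 * (a : ℂ)) = π * ((q / (2 * a) : ℝ) : ℂ) := by
      rw [hroot]; push_cast; ring
    have h1 := norm_sinh_ge ((q / (2 * a) : ℝ) : ℂ)
    rw [← e, ofReal_re, abs_div, abs_of_nonneg hq0, abs_of_neg (by linarith : 2 * a < 0)] at h1
    rw [hroot, norm_real, Real.norm_of_nonneg hq0, ← hroot]
    refine le_trans ?_ (mul_le_mul_of_nonneg_left h1 hq0)
    have hb : 0 < -(2 * a) := by linarith
    rw [show q * (π * (q / -(2 * a))) = π * q ^ 2 / (-(2 * a)) by ring, le_div_iff₀ hb, hqq]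
    have : -(2 * a) ≤ -a ^ 2 - 2 * a * n := by nlinarith
    nlinarith
  rw [seriesTerm, norm_div, norm_mul, norm_mul, Real.exp_neg, ← one_div, mul_assoc]
  have hexp := Real.exp_pos n
  apply div_le_div₀ zero_le_one (norm_numerator_seriesTerm_le ha hw0 hw1 n) hexp
  calc Real.exp n = Real.exp n * 1 := by ring
    _ ≤ _ := by gcongr

lemma neg_ofReal_cpow_half {x : ℝ} (hx : 0 < x) :
    (-(x : ℂ)) ^ ((1 : ℂ) / 2) = I * (x : ℂ) ^ ((1 : ℂ) / 2) := by
  have hx' : (x : ℂ) ≠ 0 := ofReal_ne_zero.2 hx.ne'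
  rw [cpow_def_of_ne_zero (neg_ne_zero.2 hx'), cpow_def_of_ne_zero hx']
  have : log (-(x : ℂ)) = log x + π * I := by
    rw [← ofReal_neg, log, log, arg_ofReal_of_neg (by linarith), arg_ofReal_of_nonneg hx.le]
    simp
  rw [this, add_mul, exp_add, mul_comm, show π * I * (1 / 2) = (π / 2 : ℂ) * I by ring,
    exp_pi_div_two_mul_I]

/-- For `n < -a / 2` the square root is `I` times `√(a² + 2an)`, which turns the hyperbolic sine into a
sine and produces a minus sign. -/
lemma seriesTerm_eq_neg {a : ℝ} (w : ℝ) (ha : a < 0) {n : ℕ} (hn : (n : ℝ) < -a / 2) :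
    seriesTerm a w n = -(cexp ((-((n : ℂ) / (2 * (a : ℂ)))) * (Real.log w : ℂ)) /
            (deriv riemannZeta (-2 * (n : ℂ)) *
              (((a : ℂ) ^ 2 + 2 * (a : ℂ) * (n : ℂ)) ^ ((1 : ℂ) / 2)) *
              Complex.sin ((π : ℂ) *
                (((a : ℂ) ^ 2 + 2 * (a : ℂ) * (n : ℂ)) ^ ((1 : ℂ) / 2)) /
                (2 * (a : ℂ))))) := by
  have hroot : poleRoot a n = I * ((a : ℂ) ^ 2 + 2 * (a : ℂ) * (n : ℂ)) ^ ((1 : ℂ) / 2) := by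
    have h := neg_ofReal_cpow_half (x := a ^ 2 + 2 * a * n) (by nlinarith)
    push_cast at h
    rw [poleRoot, ← h]
    congr 1
    ring
  rw [seriesTerm, hroot]
  generalize ((a : ℂ) ^ 2 + 2 * (a : ℂ) * (n : ℂ)) ^ ((1 : ℂ) / 2) = r
  rw [show (π : ℂ) * (I * r) / (2 * a) = (π * r / (2 * a)) * I by ring, sinh_mul_I]
  generalize sin (π * r / (2 * a)) = S
  generalize deriv riemannZeta (-2 * (n : ℂ)) = A
  rw [show A * (I * r) * (S * I) = -(A * r * S) by linear_combination A * r * S * I_sq, div_neg]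

lemma sum_Icc_seriesTerm (a w : ℝ) (N : ℕ) : ∑ n ∈ Finset.Icc 1 N, seriesTerm a w n =
    ∑ n ∈ Finset.range (N + 1), seriesTerm a w n - seriesTerm a w 0 := by
  rw [Finset.range_eq_Ico, Finset.sum_eq_sum_Ico_succ_bot (Nat.succ_pos N), add_sub_cancel_left]
  rfl

/-- The limit of the finite residue formula as the rectangles exhaust the strip. The series starts
at `n = 1`, as `seriesTerm a w 0` need not vanish. -/
lemma integral_stripFun_line {a w : ℝ} (ha : a < 0) (hint : ∀ n : ℕ, 0 < n → a ≠ -(n : ℝ))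
    (hw0 : 0 < w) (hw1 : w ≤ 1) :
    ∫ v : ℝ, stripFun a w (v + ((1 / 2 : ℝ) : ℂ) * I) =
      cexp (((1 : ℂ) / 4) * (Real.log w : ℂ)) / riemannZeta (a : ℂ) +
        (π / 2 : ℂ) * (∑' n, seriesTerm a w n - seriesTerm a w 0) := by
  have hb : 0 < -a := by linarith
  have hsum := summable_seriesTerm ha hw0 hw1
  -- At `u = ± R N` the argument of `ζ` is `-(2 N + 1)`, halfway between two trivial zeros.
  set R : ℕ → ℝ := fun N => Real.sqrt ((2 * N + 1) / (4 * (-a)) - 1 / 4) with hRdef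
  have hRtend : Tendsto R atTop atTop := by
    refine Real.tendsto_sqrt_atTop.comp (tendsto_atTop_add_const_right _ _ ?_)
    refine Tendsto.atTop_div_const (by linarith) ?_
    refine tendsto_atTop_add_const_right _ _ ?_
    exact tendsto_natCast_atTop_atTop.const_mul_atTop two_pos
  have hRpos : ∀ᶠ N in atTop, 0 < R N := hRtend.eventually_gt_atTop 0
  have hReq : ∀ N, 0 < R N → 4 * a * (R N ^ 2 + 1 / 4) = -(2 * N + 1) := by
    intro N hN
    rw [hRdef] at hN ⊢
    simp only at hN ⊢
    rw [Real.sq_sqrt (Real.sqrt_pos.1 hN).le]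
    have ha0 : a ≠ 0 := ha.ne
    field_simp
    ring
  have hJ : Tendsto (fun N => ∫ x : ℝ in -(R N)..(R N), stripFun a w (x + ((1 / 2 : ℝ) : ℂ) * I))
      atTop (𝓝 (∫ v : ℝ, stripFun a w (v + ((1 / 2 : ℝ) : ℂ) * I))) :=
    intervalIntegral_tendsto_integral (integrable_stripFun ha hw0 hw1)
      (tendsto_neg_atTop_atBot.comp hRtend) hRtend
  have hT : Tendsto (fun N => ∑ n ∈ Finset.Icc 1 N, seriesTerm a w n) atTop
      (𝓝 (∑' n, seriesTerm a w n - seriesTerm a w 0)) := by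
    simp_rw [sum_Icc_seriesTerm]
    exact (hsum.hasSum.tendsto_sum_nat.comp (tendsto_add_atTop_nat 1)).sub_const _
  obtain ⟨X, hX0, hX⟩ := exists_side_bound ha hw0 hw1
  have hinv : Tendsto (fun N => 1 / R N) atTop (𝓝 0) := by
    simp only [one_div]
    exact hRtend.inv_tendsto_atTop
  have hside : ∀ s : ℝ, |s| = 1 → Tendsto (fun N =>
      ∫ y : ℝ in (-(1/2))..(1/2), stripFun a w ((s * R N : ℝ) + y * I)) atTop (𝓝 0) := by
    intro s hs
    refine squeeze_zero_norm' ?_ hinv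
    filter_upwards [hRtend.eventually_ge_atTop X, hRpos] with N hN hN0
    have h := intervalIntegral.norm_integral_le_of_norm_le_const (a := -(1/2 : ℝ)) (b := 1 / 2)
      (C := 1 / R N) (f := fun y : ℝ => stripFun a w ((s * R N : ℝ) + y * I)) (by
        intro y hy
        rw [uIoc_of_le (by norm_num)] at hy
        refine hX N (R N) hN (hReq N hN0) _ ?_ ?_
        · simp [abs_mul, hs, abs_of_pos hN0]
        · simpa using abs_le.2 ⟨hy.1.le, hy.2⟩)
    norm_num at h
    simpa using h
  have hlim := ((hT.const_mul (π / 2 : ℂ)).const_add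
    (cexp (((1 : ℂ) / 4) * (Real.log w : ℂ)) / riemannZeta (a : ℂ))).add
    (((hside 1 (by simp)).sub (hside (-1) (by simp))).const_mul (I / 2))
  have heq := tendsto_nhds_unique (hJ.congr' (by
    filter_upwards [hRpos] with N hN
    rw [integral_stripFun_eq ha hint hN (hReq N hN)])) (by simpa using hlim)
  rw [heq, one_div]

end Auxiliary

theorem stmt_5 (a w : ℝ) (ha : a < 0)
    (hint : ∀ n : ℕ, 0 < n → a ≠ -(n : ℝ))
    (hsin : ∀ n : ℕ, 1 ≤ n → n ≤ Nat.floor (-a / 2) →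
      Complex.sin ((π : ℂ) * (((a : ℂ) ^ 2 + 2 * (a : ℂ) * (n : ℂ)) ^ ((1 : ℂ) / 2)) /
        (2 * (a : ℂ))) ≠ 0)
    (hw0 : 0 < w) (hw1 : w ≤ 1) :
    ∫ v : ℝ, Complex.exp (((v : ℂ) ^ 2 + I * (v : ℂ)) * (Real.log w : ℂ)) /
        (riemannZeta (4 * (a : ℂ) * ((v : ℂ) ^ 2 + I * (v : ℂ))) *
          Complex.cosh ((π : ℂ) * (v : ℂ)))
    = Complex.exp (((1 : ℂ) / 4) * (Real.log w : ℂ)) / riemannZeta (a : ℂ)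
      + ((π : ℂ) / 2) * (∑' j : ℕ,
          (fun n : ℕ =>
            Complex.exp ((-((n : ℂ) / (2 * (a : ℂ)))) * (Real.log w : ℂ)) /
              (deriv riemannZeta (-2 * (n : ℂ)) *
                ((-(a : ℂ) ^ 2 - 2 * (a : ℂ) * (n : ℂ)) ^ ((1 : ℂ) / 2)) *
                Complex.sinh ((π : ℂ) *
                  ((-(a : ℂ) ^ 2 - 2 * (a : ℂ) * (n : ℂ)) ^ ((1 : ℂ) / 2)) /
                  (2 * (a : ℂ)))))
          (j + Nat.ceil (-a / 2)))
      - ((π : ℂ) / 2) * ∑ n ∈ Finset.Icc 1 (Nat.floor (-a / 2)),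
          Complex.exp ((-((n : ℂ) / (2 * (a : ℂ)))) * (Real.log w : ℂ)) /
            (deriv riemannZeta (-2 * (n : ℂ)) *
              (((a : ℂ) ^ 2 + 2 * (a : ℂ) * (n : ℂ)) ^ ((1 : ℂ) / 2)) *
              Complex.sin ((π : ℂ) *
                (((a : ℂ) ^ 2 + 2 * (a : ℂ) * (n : ℂ)) ^ ((1 : ℂ) / 2)) /
                (2 * (a : ℂ)))) := by
  set m := Nat.floor (-a / 2) with hm
  have hne : ∀ k : ℕ, (k : ℝ) ≠ -a / 2 := by
    intro k hk
    rcases Nat.eq_zero_or_pos k with rfl | hk0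
    · simp at hk; linarith
    · exact hint (2 * k) (by omega) (by push_cast; linarith)
  have hmlt : (m : ℝ) < -a / 2 :=
    lt_of_le_of_ne (Nat.floor_le (by linarith)) (hne m)
  -- As `-a / 2` is not an integer, the two sums together run over every `n ≥ 1` exactly once.
  have hceil : Nat.ceil (-a / 2) = m + 1 := by
    apply le_antisymm
    · exact Nat.ceil_le.2 (by push_cast; exact (Nat.lt_floor_add_one _).le)
    · exact Nat.lt_ceil.2 hmlt
  have hA : ∑ n ∈ Finset.Icc 1 m,
          Complex.exp ((-((n : ℂ) / (2 * (a : ℂ)))) * (Real.log w : ℂ)) /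
            (deriv riemannZeta (-2 * (n : ℂ)) *
              (((a : ℂ) ^ 2 + 2 * (a : ℂ) * (n : ℂ)) ^ ((1 : ℂ) / 2)) *
              Complex.sin ((π : ℂ) *
                (((a : ℂ) ^ 2 + 2 * (a : ℂ) * (n : ℂ)) ^ ((1 : ℂ) / 2)) /
                (2 * (a : ℂ)))) = -∑ n ∈ Finset.Icc 1 m, seriesTerm a w n := by
    rw [← Finset.sum_neg_distrib]
    refine Finset.sum_congr rfl fun n hn => ?_
    have hnm : (n : ℝ) ≤ m := by exact_mod_cast (Finset.mem_Icc.1 hn).2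
    rw [seriesTerm_eq_neg w ha (lt_of_le_of_lt hnm hmlt), neg_neg]
  have hB : (∑' j : ℕ,
          (fun n : ℕ =>
            Complex.exp ((-((n : ℂ) / (2 * (a : ℂ)))) * (Real.log w : ℂ)) /
              (deriv riemannZeta (-2 * (n : ℂ)) *
                ((-(a : ℂ) ^ 2 - 2 * (a : ℂ) * (n : ℂ)) ^ ((1 : ℂ) / 2)) *
                Complex.sinh ((π : ℂ) *
                  ((-(a : ℂ) ^ 2 - 2 * (a : ℂ) * (n : ℂ)) ^ ((1 : ℂ) / 2)) /
                  (2 * (a : ℂ)))))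
          (j + Nat.ceil (-a / 2))) = ∑' j : ℕ, seriesTerm a w (j + (m + 1)) := by
    rw [hceil]; rfl
  rw [hA, hB]
  simp_rw [← stripFun_add_half_I]
  have hsplit := (summable_seriesTerm ha hw0 hw1).sum_add_tsum_nat_add (m + 1)
  rw [integral_stripFun_line ha hint hw0 hw1, ← hsplit, sum_Icc_seriesTerm]
  ring
end

section
/- Fix ρ_m > 0 and set τ_m = 1/2 + i·ρ_m, z₂ = √(√(4ρ_m² + 1) + 2ρ_m), c₁ = (1 + 2·z₂²·ρ_m)/(2·z₂·(2ρ_m − z₂²)²), c₂ = 1/(2·z₂·(2ρ_m − z₂²)). For real ρ define T̂(ρ) = 1/( √((1/2 + i·ρ) − τ_m) · sinh( π·√(τ_m·((1/2 + i·ρ) − τ_m))/(2τ_m) ) ) and T̄(ρ) = 1/( √((1/2 − i·ρ) − τ_m) · sinh( π·√(τ_m·((1/2 − i·ρ) − τ_m))/(2τ_m) ) ). Then, as ρ → +∞, √ρ · exp((c₁ − i·c₂)·π·√ρ) · T̂(ρ) → √2·(1 − i) and √ρ · exp(−(c₂ + i·c₁)·π·√ρ) · T̄(ρ) → √2·(1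 + i). -/
/-!
Put `s = 1/(2 z₂) + i z₂/2`, the principal square root of `i τm`, and `κ = c₁ - i c₂`; the
algebraic identities `z₂² = R + 2 ρm`, `R² = 4 ρm² + 1` give `s = 2 τm κ`. With `x = ρ - ρm`, the
two square roots in the first function are `√x (1 + i)/√2` and `√x s`, so the argument of `sinh` is
`κ π √x`. With `y = ρ + ρm`, those in the second function are `√y (1 - i)/√2` and `√y (-i s)`, so
the argument of `sinh` is `-i κ π √y = -(c₂ + i c₁) π √y`. Both `κ` and `-i κ` have positive real
part, and `√(ρ + u) - √ρ → 0`, so both limits are instances of `tendsto_exp_div_sinh`.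
-/

open Complex Filter
open scoped Real Topology

lemma tendsto_sqrt_sub_sqrt_add (u : ℝ) :
    Tendsto (fun ρ : ℝ => Real.sqrt ρ - Real.sqrt (ρ + u)) atTop (𝓝 0) := by
  have hs : Tendsto (fun ρ : ℝ => Real.sqrt ρ + Real.sqrt (ρ + u)) atTop atTop :=
    tendsto_atTop_mono (fun _ => le_add_of_nonneg_right (Real.sqrt_nonneg _))
      Real.tendsto_sqrt_atTop
  refine (hs.const_div_atTop (-u)).congr' ?_
  filter_upwards [eventually_gt_atTop 0, eventually_gt_atTop (-u)] with ρ h0 hu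
  have h1 : 0 < Real.sqrt ρ := Real.sqrt_pos.2 h0
  have h2 : 0 < Real.sqrt (ρ + u) := Real.sqrt_pos.2 (by linarith)
  have e1 := Real.sq_sqrt h0.le
  have e2 := Real.sq_sqrt (show 0 ≤ ρ + u by linarith)
  rw [div_eq_iff (by positivity)]
  linarith [e1, e2, show (√ρ - √(ρ + u)) * (√ρ + √(ρ + u)) = √ρ ^ 2 - √(ρ + u) ^ 2 by ring]

lemma tendsto_sqrt_div_sqrt_add (u : ℝ) :
    Tendsto (fun ρ : ℝ => Real.sqrt ρ / Real.sqrt (ρ + u)) atTop (𝓝 1) := by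
  have hs : Tendsto (fun ρ : ℝ => Real.sqrt (ρ + u)) atTop atTop :=
    Real.tendsto_sqrt_atTop.comp (tendsto_atTop_add_const_right _ u tendsto_id)
  have h := ((tendsto_sqrt_sub_sqrt_add u).div_atTop hs).add_const 1
  rw [zero_add] at h
  refine h.congr' ?_
  filter_upwards [eventually_gt_atTop (-u)] with ρ hu
  have h2 : 0 < Real.sqrt (ρ + u) := Real.sqrt_pos.2 (by linarith)
  field_simp
  ring

/-- Since `sinh z = e^z (1 - e^(-2z)) / 2`, the quotient is `√ρ / √(ρ + u)` times
`e^(κ π (√ρ - √(ρ + u)))` times `(2 / α) / (1 - e^(-2 κ π √(ρ + u)))`. -/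
lemma tendsto_exp_div_sinh (u : ℝ) (κ α : ℂ) (hκ : 0 < κ.re) :
    Tendsto (fun ρ : ℝ => (Real.sqrt ρ : ℂ) * Complex.exp (κ * (π : ℂ) * (Real.sqrt ρ : ℂ)) *
      (1 / ((Real.sqrt (ρ + u) : ℂ) * α *
        Complex.sinh (κ * (π : ℂ) * (Real.sqrt (ρ + u) : ℂ)))))
      atTop (𝓝 (2 / α)) := by
  have hs : Tendsto (fun ρ : ℝ => Real.sqrt (ρ + u)) atTop atTop :=
    Real.tendsto_sqrt_atTop.comp (tendsto_atTop_add_const_right _ u tendsto_id)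
  have t1 : Tendsto (fun ρ : ℝ => ((Real.sqrt ρ / Real.sqrt (ρ + u) : ℝ) : ℂ)) atTop
      (𝓝 ((1 : ℝ) : ℂ)) :=
    (Complex.continuous_ofReal.tendsto _).comp (tendsto_sqrt_div_sqrt_add u)
  have t2 : Tendsto (fun ρ : ℝ => Complex.exp (κ * π * ((Real.sqrt ρ - Real.sqrt (ρ + u) : ℝ) : ℂ)))
      atTop (𝓝 (Complex.exp (κ * π * ((0 : ℝ) : ℂ)))) :=
    (Complex.continuous_exp.tendsto _).comp
      (((Complex.continuous_ofReal.tendsto _).comp (tendsto_sqrt_sub_sqrt_add u)).const_mul _)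
  have t3 : Tendsto (fun ρ : ℝ => Complex.exp (-2 * (κ * π * (Real.sqrt (ρ + u) : ℂ))))
      atTop (𝓝 0) := by
    rw [tendsto_zero_iff_norm_tendsto_zero]
    have h : Tendsto (fun ρ : ℝ => (2 * κ.re * π) * Real.sqrt (ρ + u)) atTop atTop :=
      hs.const_mul_atTop (by positivity)
    refine (Real.tendsto_exp_neg_atTop_nhds_zero.comp h).congr fun ρ => ?_
    rw [Complex.norm_exp, Function.comp_apply]
    congr 1
    simp
    ring
  have t4 : Tendsto (fun ρ : ℝ => (1 - Complex.exp (-2 * (κ * π * (Real.sqrt (ρ + u) : ℂ))))⁻¹)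
      atTop (𝓝 ((1 - 0)⁻¹)) := (t3.const_sub 1).inv₀ (by simp)
  have t := ((t1.mul t2).mul t4).mul_const (2 / α)
  simp only [ofReal_one, ofReal_zero, mul_zero, Complex.exp_zero, sub_zero, inv_one, mul_one,
    one_mul] at t
  refine t.congr fun ρ => ?_
  have hsinh : ∀ z : ℂ, Complex.sinh z = Complex.exp z * (1 - Complex.exp (-2 * z)) / 2 := by
    intro z
    rw [Complex.sinh, mul_sub, ← Complex.exp_add]
    ring_nf
  rw [hsinh, Complex.ofReal_sub, mul_sub, Complex.exp_sub, Complex.ofReal_div]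
  simp only [div_eq_mul_inv, mul_inv, inv_inv, one_mul]
  ring

/-- The principal square root of `x s²` is `√x s` when `s` lies in the right half-plane. -/
lemma cpow_half_eq (w s : ℂ) (x : ℝ) (hx : 0 < x) (hs : 0 < s.re) (hw : w = x * s ^ 2) :
    w ^ ((1 : ℂ) / 2) = (Real.sqrt x : ℂ) * s := by
  have h : w = ((Real.sqrt x : ℂ) * s) ^ 2 := by
    rw [mul_pow, ← Complex.ofReal_pow, Real.sq_sqrt hx.le, hw]
  rw [h, one_div, Complex.sq_cpow_two_inv]
  rw [Complex.re_ofReal_mul]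
  exact mul_pos (Real.sqrt_pos.2 hx) hs

theorem stmt_9 (ρm : ℝ) (hρm : 0 < ρm) (τm : ℂ) (z₂ c₁ c₂ : ℝ)
    (hτm : τm = 1 / 2 + I * (ρm : ℂ))
    (hz₂ : z₂ = Real.sqrt (Real.sqrt (4 * ρm ^ 2 + 1) + 2 * ρm))
    (hc₁ : c₁ = (1 + 2 * z₂ ^ 2 * ρm) / (2 * z₂ * (2 * ρm - z₂ ^ 2) ^ 2))
    (hc₂ : c₂ = 1 / (2 * z₂ * (2 * ρm - z₂ ^ 2))) :
    Tendsto (fun ρ : ℝ =>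
        (Real.sqrt ρ : ℂ) * Complex.exp (((c₁ : ℂ) - I * (c₂ : ℂ)) * (π : ℂ) *
            (Real.sqrt ρ : ℂ)) *
          (1 / (((1 / 2 + I * (ρ : ℂ)) - τm) ^ ((1 : ℂ) / 2) *
            Complex.sinh ((π : ℂ) * (τm * ((1 / 2 + I * (ρ : ℂ)) - τm)) ^ ((1 : ℂ) / 2) /
              (2 * τm)))))
      atTop (𝓝 ((Real.sqrt 2 : ℂ) * (1 - I)))
    ∧ Tendsto (fun ρ : ℝ =>
        (Real.sqrt ρ : ℂ) * Complex.exp (-((c₂ : ℂ) + I * (c₁ : ℂ)) * (π : ℂ) *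
            (Real.sqrt ρ : ℂ)) *
          (1 / (((1 / 2 - I * (ρ : ℂ)) - τm) ^ ((1 : ℂ) / 2) *
            Complex.sinh ((π : ℂ) * (τm * ((1 / 2 - I * (ρ : ℂ)) - τm)) ^ ((1 : ℂ) / 2) /
              (2 * τm)))))
      atTop (𝓝 ((Real.sqrt 2 : ℂ) * (1 + I))) := by
  obtain ⟨R, hR⟩ : ∃ R, R = Real.sqrt (4 * ρm ^ 2 + 1) := ⟨_, rfl⟩
  have hRpos : 0 < R := by rw [hR]; positivity
  have hRsq : R ^ 2 = 4 * ρm ^ 2 + 1 := by rw [hR]; exact Real.sq_sqrt (by positivity)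
  rw [← hR] at hz₂
  have hzpos : 0 < z₂ := by rw [hz₂]; positivity
  have hzsq : z₂ ^ 2 = R + 2 * ρm := by rw [hz₂]; exact Real.sq_sqrt (by positivity)
  have hd : 2 * ρm - z₂ ^ 2 = -R := by rw [hzsq]; ring
  have hz4 : z₂ ^ 2 * (R - 2 * ρm) = 1 := by rw [hzsq]; nlinarith
  have hc₁' : c₁ = z₂ / (2 * R) := by
    rw [hc₁, hd]
    field_simp
    linarith
  have hc₂' : c₂ = -(1 / (2 * z₂ * R)) := by
    rw [hc₂, hd]
    field_simp
  have hc₁pos : 0 < c₁ := by rw [hc₁']; positivity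
  have hc₂neg : 0 < -c₂ := by rw [hc₂', neg_neg]; positivity
  have hτ0 : τm ≠ 0 := by
    intro h
    have := congrArg Complex.re h
    simp [hτm] at this
  obtain ⟨s, hs⟩ : ∃ s : ℂ, s = ⟨1 / (2 * z₂), z₂ / 2⟩ := ⟨_, rfl⟩
  have hs2 : s ^ 2 = I * τm := by
    rw [hs, hτm, sq]
    apply Complex.ext
    · simp
      field_simp
      nlinarith
    · simp
      field_simp
      norm_num
  have hsκ : s = 2 * τm * (c₁ - I * c₂) := by
    rw [hs, hτm]
    apply Complex.ext
    · simp
      rw [hc₁', hc₂']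
      field_simp
      linarith
    · simp
      rw [hc₁', hc₂']
      field_simp
      linarith
  have hsre : 0 < s.re := by rw [hs]; positivity
  have hsim : 0 < s.im := by rw [hs]; positivity
  have h2pos : 0 < Real.sqrt 2 := by positivity
  have h2 : (Real.sqrt 2 : ℂ) ^ 2 = 2 := by
    rw [← Complex.ofReal_pow, Real.sq_sqrt (by norm_num)]; norm_num
  have h20 : (Real.sqrt 2 : ℂ) ≠ 0 := by exact_mod_cast h2pos.ne'
  constructor
  · have h := tendsto_exp_div_sinh (-ρm) (c₁ - I * c₂) (((1 / Real.sqrt 2 : ℝ) : ℂ) * (1 + I))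
      (by simpa using hc₁pos)
    have hl : 2 / (((1 / Real.sqrt 2 : ℝ) : ℂ) * (1 + I)) = (Real.sqrt 2 : ℂ) * (1 - I) := by
      have h1 : (1 + I : ℂ) ≠ 0 := fun h => by simpa using congrArg Complex.re h
      push_cast
      field_simp
      linear_combination I_sq
    rw [hl] at h
    refine h.congr' ?_
    filter_upwards [eventually_gt_atTop ρm] with ρ hρ
    have hx : 0 < ρ + -ρm := by linarith
    rw [cpow_half_eq (1 / 2 + I * (ρ : ℂ) - τm) (((1 / Real.sqrt 2 : ℝ) : ℂ) * (1 + I)) _ hx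
        (by rw [Complex.re_ofReal_mul]; simp)
        (by
          rw [hτm]; push_cast; field_simp
          linear_combination (2 * I * (ρ - ρm)) * h2 - 2 * (ρ - ρm) * I_sq),
      cpow_half_eq (τm * (1 / 2 + I * (ρ : ℂ) - τm)) s _ hx hsre
        (by rw [hs2, hτm]; push_cast; ring)]
    congr 4
    rw [hsκ]
    field_simp
  · have h := tendsto_exp_div_sinh ρm (-(c₂ + I * c₁)) (((1 / Real.sqrt 2 : ℝ) : ℂ) * (1 - I))
      (by simpa using hc₂neg)
    have hl : 2 / (((1 / Real.sqrt 2 : ℝ) : ℂ) * (1 - I)) = (Real.sqrt 2 : ℂ) * (1 + I) := by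
      have h1 : (1 - I : ℂ) ≠ 0 := fun h => by simpa using congrArg Complex.re h
      push_cast
      field_simp
      linear_combination I_sq
    rw [hl] at h
    refine h.congr' ?_
    filter_upwards [eventually_gt_atTop 0] with ρ hρ
    have hx : 0 < ρ + ρm := by linarith
    rw [cpow_half_eq (1 / 2 - I * (ρ : ℂ) - τm) (((1 / Real.sqrt 2 : ℝ) : ℂ) * (1 - I)) _ hx
        (by rw [Complex.re_ofReal_mul]; simp)
        (by
          rw [hτm]; push_cast; field_simp
          linear_combination (-2 * I * (ρ + ρm)) * h2 - 2 * (ρ + ρm) * I_sq),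
      cpow_half_eq (τm * (1 / 2 - I * (ρ : ℂ) - τm)) (-I * s) _ hx (by simpa using hsim)
        (by rw [mul_pow, hs2, hτm, neg_sq, I_sq]; push_cast; ring)]
    congr 4
    rw [hsκ]
    field_simp
    linear_combination (-c₂ * (Real.sqrt (ρ + ρm) : ℂ)) * I_sq
end

section
/- As s → +∞ along the real axis, 2^s · ζ'(s)/ζ(s) → −log 2; that is, the function s ↦ 2^s · ζ'(s)/ζ(s) of a real variable s tends to −log 2 at +∞ (so ζ'(s)/ζ(s) ∼ −log 2 · 2^{−s}). -/
open Complex Filter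
open scoped Real Topology

/-!
For real `s > 1`, `-ζ'(s)/ζ(s) = ∑ Λ(n) n⁻ˢ`. Since `Λ(0) = Λ(1) = 0`, the leading term of this
Dirichlet series is `Λ(2) 2⁻ˢ = log 2 · 2⁻ˢ`, and after multiplication by `2ˢ` all other terms
vanish in the limit (`LSeries.tendsto_cpow_mul_atTop`).
-/

theorem stmt_10 :
    Tendsto (fun s : ℝ =>
        (((2 : ℝ) ^ s : ℝ) : ℂ) * deriv riemannZeta (s : ℂ) / riemannZeta (s : ℂ))
      atTop (𝓝 (-(Real.log 2 : ℂ))) := by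
  have hsum : LSeriesSummable (fun n => (ArithmeticFunction.vonMangoldt n : ℂ)) 2 :=
    ArithmeticFunction.LSeriesSummable_vonMangoldt (by norm_num)
  have hlim := LSeries.tendsto_cpow_mul_atTop
    (f := fun n => (ArithmeticFunction.vonMangoldt n : ℂ)) (n := 1)
    (fun m hm => by interval_cases m <;> simp)
    (hsum.abscissaOfAbsConv_le.trans_lt (EReal.coe_lt_top _))
  have hval : ArithmeticFunction.vonMangoldt (1 + 1) = Real.log 2 := by
    simpa using ArithmeticFunction.vonMangoldt_apply_prime Nat.prime_two
  rw [hval] at hlim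
  refine hlim.neg.congr' ?_
  filter_upwards [eventually_gt_atTop 1] with s hs
  rw [ArithmeticFunction.LSeries_vonMangoldt_eq_deriv_riemannZeta_div (by simpa using hs),
    Complex.ofReal_cpow (by norm_num)]
  push_cast
  rw [one_add_one_eq_two]
  ring
end
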